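/- For every integer n ≥ 2 and every ε > 0, Kac's random walk on SO(n) satisfies the mixing-time bound τ_{D,2}(ε) ≤ ⌈n² ln(π√n / ε)⌉; that is, for every probability measure μ on SO(n) and every integer t ≥ n² ln(π√n / ε), one has W_{D,2}(μK^t, H) ≤ ε, where H is the Haar probability measure on SO(n). -/

import Mathlib

open MeasureTheory ENNReal Filter Topology Matrix

noncomputable section

/-- The (Borel) product measurable structure on matrices. -/
instance matrixMeasurableSpace {m n R : Type*} [MeasurableSpace R] :
    MeasurableSpace (Matrix m n R) :=
  (inferInstance : MeasurableSpace (m → n → R))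

/-- `η` is a coupling of `μ` and `ν`: its two marginals are `μ` and `ν`. -/
def IsCoupling {X : Type*} [MeasurableSpace X] (η : Measure (X × X)) (μ ν : Measure X) : Prop :=
  η.map Prod.fst = μ ∧ η.map Prod.snd = ν

/-- The `L^p` transportation cost (Wasserstein) distance associated with the distance
function `d`, with values in `ℝ≥0∞`:
`W_{d,p}(μ,ν) = inf { (∫ d(x,y)^p dη)^{1/p} : η a coupling of (μ,ν) }`. -/
def wassersteinE {X : Type*} [MeasurableSpace X] (d : X → X → ℝ≥0∞) (p : ℝ)
    (μ ν : Measure X) : ℝ≥0∞ :=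
  ⨅ (η : Measure (X × X)) (_ : IsCoupling η μ ν), (∫⁻ z, d z.1 z.2 ^ p ∂η) ^ (1 / p)

/-- The length of the curve `γ` over `[0,1]`, w.r.t. the distance function `d`:
the supremum, over all partitions `0 = t 0 ≤ t 1 ≤ ⋯ ≤ t k = 1` of `[0,1]`, of the sums of
the distances between consecutive points of the curve. -/
def pathLengthE {X : Type*} (d : X → X → ℝ≥0∞) (γ : ℝ → X) : ℝ≥0∞ :=
  ⨆ (k : ℕ) (t : Fin (k + 1) → ℝ) (_ : Monotone t) (_ : t 0 = 0) (_ : t (Fin.last k) = 1),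
    ∑ i : Fin k, d (γ (t i.castSucc)) (γ (t i.succ))

/-- The intrinsic (length) distance on the set `S` induced by the distance function `d`:
the infimum of `d`-lengths of continuous paths joining `a` to `b` inside `S`. -/
def intrinsicDistE {X : Type*} [TopologicalSpace X] (d : X → X → ℝ≥0∞) (S : Set X)
    (a b : X) : ℝ≥0∞ :=
  ⨅ (γ : ℝ → X) (_ : ContinuousOn γ (Set.Icc 0 1)) (_ : Set.MapsTo γ (Set.Icc 0 1) S)
    (_ : γ 0 = a) (_ : γ 1 = b), pathLengthE d γ

/-- `t` iterated steps of the Markov transition kernel `P`, started from the initial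
distribution `μ` (so `kernelIterate P t μ = μP^t`). -/
def kernelIterate {X : Type*} [MeasurableSpace X] (P : X → Measure X) :
    ℕ → Measure X → Measure X
  | 0, μ => μ
  | t + 1, μ => (kernelIterate P t μ).bind P

/-- A Haar probability measure for the multiplicative set `S`, viewed as a measure on the
ambient space: a probability measure carried by `S` that is invariant under left and right
translations by all elements of `S`. -/
def IsHaarLike {X : Type*} [MeasurableSpace X] [Mul X] (S : Set X) (μ : Measure X) : Prop :=
  IsProbabilityMeasure μ ∧ μ Sᶜ = 0 ∧
    ∀ a ∈ S, μ.map (fun x => a * x) = μ ∧ μ.map (fun x => x * a) = μ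

/-- The Haar probability measure of a compact matrix group `S` (such as `SO(n)` or `U(n)`),
viewed as a measure on the ambient matrix space.  For such `S` a translation-invariant
probability measure exists and is unique, so `haarLike S` is *the* Haar probability
measure of `S`. -/
def haarLike {X : Type*} [MeasurableSpace X] [Mul X] (S : Set X) : Measure X := by
  classical exact if h : ∃ μ, IsHaarLike S μ then h.choose else 0

/-- The set of pairs `1 ≤ i < j ≤ n` of indices. -/
def pairs (n : ℕ) : Finset (Fin n × Fin n) :=
  Finset.univ.filter fun p => p.1 < p.2

/-- The special orthogonal group `SO(n)`, as a subset of the `n × n` real matrices. -/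
def SO (n : ℕ) : Set (Matrix (Fin n) (Fin n) ℝ) :=
  {a | a * aᵀ = 1 ∧ a.det = 1}

/-- The Hilbert–Schmidt (Frobenius) distance `‖a - b‖_hs = √(Tr((a-b)ᵀ(a-b)))` between real
matrices, as an `ℝ≥0∞`-valued distance function. -/
def hsDist {n : ℕ} (a b : Matrix (Fin n) (Fin n) ℝ) : ℝ≥0∞ :=
  ENNReal.ofReal (Real.sqrt (Matrix.trace ((a - b)ᵀ * (a - b))))

/-- The intrinsic (Riemannian/length) metric `D` on `SO(n)` induced by the Hilbert–Schmidt
norm: the infimum of `hs`-lengths of continuous paths inside `SO(n)`. -/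
def DSO (n : ℕ) (a b : Matrix (Fin n) (Fin n) ℝ) : ℝ≥0∞ :=
  intrinsicDistE hsDist (SO n) a b

/-- The rotation `R(i,j,θ)` by the angle `θ` of the plane spanned by the `i`-th and `j`-th
canonical basis vectors: `R e_i = cos θ e_i + sin θ e_j`, `R e_j = cos θ e_j - sin θ e_i`,
and `R e_k = e_k` for `k ∉ {i,j}`. -/
def kacRot {n : ℕ} (i j : Fin n) (θ : ℝ) : Matrix (Fin n) (Fin n) ℝ :=
  Matrix.of fun k l =>
    if k = i ∧ l = i then Real.cos θ
    else if k = j ∧ l = i then Real.sin θ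
    else if k = i ∧ l = j then -Real.sin θ
    else if k = j ∧ l = j then Real.cos θ
    else if k = l then 1 else 0

/-- The uniform probability measure on the angle interval `[0, 2π]`. -/
def uniformAngle : Measure ℝ :=
  (ENNReal.ofReal (2 * Real.pi))⁻¹ • MeasureTheory.volume.restrict (Set.Icc 0 (2 * Real.pi))

/-- The transition kernel of Kac's random walk on `SO(n)`:
`K_x = (1/(2π·C(n,2))) ∑_{1≤i<j≤n} ∫₀^{2π} δ_{R(i,j,θ)·x} dθ`. -/
def kacKernel (n : ℕ) (x : Matrix (Fin n) (Fin n) ℝ) : Measure (Matrix (Fin n) (Fin n) ℝ) :=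
  (n.choose 2 : ℝ≥0∞)⁻¹ •
    ∑ p ∈ pairs n, uniformAngle.map fun θ => kacRot p.1 p.2 θ * x

/-- The product σ-algebra on real matrices is the Borel σ-algebra. -/
instance matrixBorelSpace {m n : Type*} [Countable m] [Countable n] : BorelSpace (Matrix m n ℝ) :=
  (inferInstance : BorelSpace (m → n → ℝ))

/-- Matrices over a second countable space form a second countable space. -/
instance matrixSecondCountable {m n : Type*} [Countable m] [Countable n] :
    SecondCountableTopology (Matrix m n ℝ) :=
  (inferInstance : SecondCountableTopology (m → n → ℝ))

/-- Multiplication of real matrices is jointly measurable. -/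
instance matrixMeasurableMul {n : ℕ} : MeasurableMul₂ (Matrix (Fin n) (Fin n) ℝ) :=
  ⟨(continuous_fst.matrix_mul continuous_snd).measurable⟩

theorem SO.mul_transpose_self {n : ℕ} {a : Matrix (Fin n) (Fin n) ℝ} (ha : a ∈ SO n) :
    a * aᵀ = 1 := ha.1

theorem SO.transpose_mul_self {n : ℕ} {a : Matrix (Fin n) (Fin n) ℝ} (ha : a ∈ SO n) :
    aᵀ * a = 1 := mul_eq_one_comm.mp ha.1

theorem SO.one_mem (n : ℕ) : (1 : Matrix (Fin n) (Fin n) ℝ) ∈ SO n := by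
  simp [SO]

theorem SO.mul_mem {n : ℕ} {a b : Matrix (Fin n) (Fin n) ℝ} (ha : a ∈ SO n) (hb : b ∈ SO n) :
    a * b ∈ SO n := by
  refine ⟨?_, by rw [det_mul, ha.2, hb.2, one_mul]⟩
  rw [transpose_mul, Matrix.mul_assoc, ← Matrix.mul_assoc b, hb.1, Matrix.one_mul, ha.1]

theorem SO.transpose_mem {n : ℕ} {a : Matrix (Fin n) (Fin n) ℝ} (ha : a ∈ SO n) :
    aᵀ ∈ SO n :=
  ⟨by rw [transpose_transpose, SO.transpose_mul_self ha], by rw [det_transpose, ha.2]⟩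

theorem SO.isClosed (n : ℕ) : IsClosed (SO n) := by
  have h1 : IsClosed {a : Matrix (Fin n) (Fin n) ℝ | a * aᵀ = 1} :=
    isClosed_eq (continuous_id.matrix_mul continuous_id.matrix_transpose) continuous_const
  have h2 : IsClosed {a : Matrix (Fin n) (Fin n) ℝ | a.det = 1} :=
    isClosed_eq continuous_id.matrix_det continuous_const
  exact h1.inter h2

theorem SO.measurableSet (n : ℕ) : MeasurableSet (SO n) := (SO.isClosed n).measurableSet

theorem SO.abs_entry_le_one {n : ℕ} {a : Matrix (Fin n) (Fin n) ℝ} (ha : a ∈ SO n)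
    (i j : Fin n) : |a i j| ≤ 1 := by
  have h : ∑ k, a i k * a i k = 1 := by
    have := congrFun (congrFun ha.1 i) i
    simpa [Matrix.mul_apply] using this
  have h2 : a i j * a i j ≤ 1 := by
    rw [← h]
    exact Finset.single_le_sum (f := fun k => a i k * a i k)
      (fun k _ => mul_self_nonneg _) (Finset.mem_univ j)
  exact abs_le_one_iff_mul_self_le_one.mpr h2

theorem SO.isCompact (n : ℕ) : IsCompact (SO n) := by
  have hK : IsCompact (Set.univ.pi fun _ : Fin n => Set.univ.pi fun _ : Fin n =>
      Set.Icc (-1 : ℝ) 1) :=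
    isCompact_univ_pi fun _ => isCompact_univ_pi fun _ => isCompact_Icc
  refine IsCompact.of_isClosed_subset (X := Fin n → Fin n → ℝ) hK (SO.isClosed n) ?_
  intro a ha i _ j _
  exact abs_le.mp (SO.abs_entry_le_one ha i j)

theorem mem_specialOrthogonalGroup_iff_mem_SO {n : ℕ} {a : Matrix (Fin n) (Fin n) ℝ} :
    a ∈ specialOrthogonalGroup (Fin n) ℝ ↔ a ∈ SO n := by
  rw [mem_specialOrthogonalGroup_iff, mem_orthogonalGroup_iff]
  rfl

theorem exists_isHaarLike_SO (n : ℕ) : ∃ μ, IsHaarLike (SO n) μ := by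
  let G := specialOrthogonalGroup (Fin n) ℝ
  have : ContinuousInv G := ⟨by
    refine Continuous.subtype_mk ?_ _
    exact (continuous_subtype_val (p := (· ∈ G))).matrix_transpose⟩
  have : IsTopologicalGroup G := {}
  have : CompactSpace G := by
    apply isCompact_iff_compactSpace.mp
    have : (G : Set (Matrix (Fin n) (Fin n) ℝ)) = SO n :=
      Set.ext fun a => mem_specialOrthogonalGroup_iff_mem_SO
    rw [this]; exact SO.isCompact n
  have : SecondCountableTopology G :=
    inferInstanceAs (SecondCountableTopology {x // x ∈ (G : Set (Matrix (Fin n) (Fin n) ℝ))})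
  have : BorelSpace G := Subtype.borelSpace _
  let ν : Measure G := Measure.haarMeasure ⊤
  have : IsProbabilityMeasure ν := ⟨by
    have := Measure.haarMeasure_self (K₀ := (⊤ : TopologicalSpace.PositiveCompacts G))
    simpa using this⟩
  have hright (g : G) : ν.map (· * g) = ν := by
    have hprob : IsProbabilityMeasure (ν.map (· * g)) :=
      Measure.isProbabilityMeasure_map (measurable_mul_const g).aemeasurable
    have h := Measure.haarMeasure_unique (ν.map (· * g)) ⊤
    rw [h]
    simp [ν]
  have hval : Measurable (Subtype.val : G → Matrix (Fin n) (Fin n) ℝ) := measurable_subtype_coe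
  refine ⟨ν.map Subtype.val, Measure.isProbabilityMeasure_map hval.aemeasurable, ?_, ?_⟩
  · rw [Measure.map_apply hval (SO.measurableSet n).compl]
    convert measure_empty (μ := ν)
    ext x
    simpa using mem_specialOrthogonalGroup_iff_mem_SO.mp x.2
  · intro a ha
    let g : G := ⟨a, mem_specialOrthogonalGroup_iff_mem_SO.mpr ha⟩
    constructor
    · rw [Measure.map_map (measurable_const_mul a) hval]
      conv_rhs => rw [← map_mul_left_eq_self ν g]
      rw [Measure.map_map hval (measurable_const_mul g)]
      rfl
    · rw [Measure.map_map (measurable_mul_const a) hval]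
      conv_rhs => rw [← hright g]
      rw [Measure.map_map hval (measurable_mul_const g)]
      rfl

theorem isHaarLike_haarLike_SO (n : ℕ) : IsHaarLike (SO n) (haarLike (SO n)) := by
  have h := exists_isHaarLike_SO n
  rw [haarLike, dif_pos h]
  exact h.choose_spec

/-- The squared Hilbert–Schmidt norm of a real matrix. -/
def hsq {n : ℕ} (A : Matrix (Fin n) (Fin n) ℝ) : ℝ := ∑ i, ∑ j, A i j ^ 2

section hsq

variable {n : ℕ} (A B : Matrix (Fin n) (Fin n) ℝ)

theorem hsq_nonneg : 0 ≤ hsq A :=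
  Finset.sum_nonneg fun _ _ => Finset.sum_nonneg fun _ _ => sq_nonneg _

theorem hsq_transpose : hsq Aᵀ = hsq A := by
  simp only [hsq, transpose_apply]
  exact Finset.sum_comm

theorem trace_transpose_mul_self_eq_hsq : trace (Aᵀ * A) = hsq A := by
  rw [← hsq_transpose]
  simp [hsq, trace, Matrix.mul_apply, sq]

theorem hsq_mul_left {R : Matrix (Fin n) (Fin n) ℝ} (hR : Rᵀ * R = 1) : hsq (R * A) = hsq A := by
  rw [← trace_transpose_mul_self_eq_hsq, ← trace_transpose_mul_self_eq_hsq, transpose_mul,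
    Matrix.mul_assoc, ← Matrix.mul_assoc Rᵀ, hR, Matrix.one_mul]

theorem hsq_mul_right {R : Matrix (Fin n) (Fin n) ℝ} (hR : R * Rᵀ = 1) :
    hsq (A * R) = hsq A := by
  rw [← hsq_transpose, transpose_mul, hsq_mul_left _ (by rwa [transpose_transpose]),
    hsq_transpose]

theorem hsq_add_le {c : ℝ} (hc : 0 < c) :
    hsq (A + B) ≤ (1 + c) * hsq A + (1 + 1 / c) * hsq B := by
  simp only [hsq, Finset.mul_sum, ← Finset.sum_add_distrib]
  refine Finset.sum_le_sum fun i _ => Finset.sum_le_sum fun j _ => ?_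
  have h : (1 + c) * A i j ^ 2 + (1 + 1 / c) * B i j ^ 2 - (A i j + B i j) ^ 2
      = (c * A i j - B i j) ^ 2 / c := by
    field_simp
    ring
  have : 0 ≤ (c * A i j - B i j) ^ 2 / c := by positivity
  simp only [Matrix.add_apply]
  linarith

theorem continuous_hsq : Continuous (hsq : Matrix (Fin n) (Fin n) ℝ → ℝ) := by
  unfold hsq
  exact continuous_finsetSum _ fun i _ => continuous_finsetSum _ fun j _ =>
    (continuous_id.matrix_elem i j).pow 2

end hsq

/-- Entrywise differentiability of a matrix-valued function of a real variable. -/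
def HasMatrixDerivAt {n : ℕ} (X : ℝ → Matrix (Fin n) (Fin n) ℝ)
    (X' : Matrix (Fin n) (Fin n) ℝ) (s : ℝ) : Prop :=
  ∀ i j, HasDerivAt (fun u => X u i j) (X' i j) s

section HasMatrixDerivAt

variable {n : ℕ} {X Y : ℝ → Matrix (Fin n) (Fin n) ℝ} {X' Y' : Matrix (Fin n) (Fin n) ℝ} {s : ℝ}

theorem HasMatrixDerivAt.mul (hX : HasMatrixDerivAt X X' s) (hY : HasMatrixDerivAt Y Y' s) :
    HasMatrixDerivAt (fun u => X u * Y u) (X' * Y s + X s * Y') s := by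
  intro i j
  simp only [Matrix.mul_apply, Matrix.add_apply, ← Finset.sum_add_distrib]
  exact HasDerivAt.fun_sum fun k _ => (hX i k).mul (hY k j)

theorem hasMatrixDerivAt_const (C : Matrix (Fin n) (Fin n) ℝ) :
    HasMatrixDerivAt (fun _ => C) 0 s :=
  fun _ _ => hasDerivAt_const _ _

theorem HasMatrixDerivAt.mul_const (hX : HasMatrixDerivAt X X' s)
    (C : Matrix (Fin n) (Fin n) ℝ) : HasMatrixDerivAt (fun u => X u * C) (X' * C) s := by
  simpa using hX.mul (hasMatrixDerivAt_const C)

theorem HasMatrixDerivAt.const_mul (hX : HasMatrixDerivAt X X' s)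
    (C : Matrix (Fin n) (Fin n) ℝ) : HasMatrixDerivAt (fun u => C * X u) (C * X') s := by
  simpa using (hasMatrixDerivAt_const C).mul hX

theorem HasMatrixDerivAt.congr_deriv (hX : HasMatrixDerivAt X X' s) (h : X' = Y') :
    HasMatrixDerivAt X Y' s := h ▸ hX

theorem continuous_of_hasMatrixDerivAt {V : ℝ → Matrix (Fin n) (Fin n) ℝ}
    (h : ∀ s, HasMatrixDerivAt X (V s) s) : Continuous X :=
  continuous_matrix fun i j =>
    continuous_iff_continuousAt.mpr fun s => (h s i j).continuousAt

end HasMatrixDerivAt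

/-- A continuous curve of orthogonal matrices has constant determinant. -/
theorem det_eq_of_continuous_orthogonal {n : ℕ} {X : ℝ → Matrix (Fin n) (Fin n) ℝ}
    (hX : Continuous X) (h : ∀ s, X s * (X s)ᵀ = 1) (a b : ℝ) : (X a).det = (X b).det := by
  have hsq (s : ℝ) : (X s).det ^ 2 = 1 := by
    have := congrArg det (h s)
    rwa [det_mul, det_transpose, det_one, ← sq] at this
  have hb : (X b).det ≠ 0 := fun h0 => by simpa [h0] using hsq b
  exact isPreconnected_univ.eq_of_sq_eq (f := fun s => (X s).det) (g := fun _ => (X b).det)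
    hX.matrix_det.continuousOn continuousOn_const (fun s _ => by simp [hsq])
    (fun _ => hb) (Set.mem_univ b) rfl (Set.mem_univ a)

/-- The curve `s ↦ diag(e cos(sβ)) + diag(sin(sβ)) J`. -/
def rotationCurve {n : ℕ} (e β : Fin n → ℝ) (J : Matrix (Fin n) (Fin n) ℝ) (s : ℝ) :
    Matrix (Fin n) (Fin n) ℝ :=
  diagonal (fun k => e k * Real.cos (s * β k)) + diagonal (fun k => Real.sin (s * β k)) * J

section rotationCurve

variable {n : ℕ} {e β χ : Fin n → ℝ} {J : Matrix (Fin n) (Fin n) ℝ}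

theorem rotationCurve_mul_transpose (he : ∀ k, e k ^ 2 = 1) (hJ : Jᵀ = -J)
    (hJβ : ∀ k l, J k l ≠ 0 → β k = β l ∧ e k = e l) (hJJ : J * J = -diagonal χ)
    (hχ : ∀ k, χ k = 1 ∨ β k = 0) (s : ℝ) :
    rotationCurve e β J s * (rotationCurve e β J s)ᵀ = 1 := by
  have hcross : diagonal (fun k => Real.sin (s * β k)) * J *
        diagonal (fun k => e k * Real.cos (s * β k)) =
      diagonal (fun k => e k * Real.cos (s * β k)) *
        (J * diagonal (fun k => Real.sin (s * β k))) := by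
    ext k l
    rw [mul_diagonal, diagonal_mul, diagonal_mul, mul_diagonal]
    by_cases h : J k l = 0
    · simp [h]
    · rw [(hJβ k l h).1, (hJβ k l h).2]; ring
  have hsin : diagonal (fun k => Real.sin (s * β k)) * J *
      (-J * diagonal (fun k => Real.sin (s * β k))) =
      diagonal (fun k => Real.sin (s * β k) ^ 2) := by
    rw [Matrix.mul_assoc, ← Matrix.mul_assoc J, Matrix.mul_neg, hJJ, neg_neg,
      diagonal_mul_diagonal, diagonal_mul_diagonal]
    congr 1
    ext k
    rcases hχ k with h | h <;> simp [h, sq]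
  rw [rotationCurve, transpose_add, transpose_mul, hJ, diagonal_transpose, diagonal_transpose,
    Matrix.add_mul, Matrix.mul_add, Matrix.mul_add, hsin, hcross, diagonal_mul_diagonal,
    Matrix.neg_mul, Matrix.mul_neg, ← add_assoc, neg_add_cancel_right, diagonal_add,
    ← diagonal_one]
  congr 1
  ext k
  have := he k
  have h2 := Real.sin_sq_add_cos_sq (s * β k)
  linear_combination Real.cos (s * β k) ^ 2 * this + h2

theorem continuous_rotationCurve : Continuous (rotationCurve e β J) := by
  unfold rotationCurve
  refine Continuous.add ?_ (Continuous.matrix_mul ?_ continuous_const) <;>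
  · refine Continuous.matrix_diagonal ?_
    fun_prop

theorem hasMatrixDerivAt_rotationCurve (hJβ : ∀ k l, J k l ≠ 0 → β k = β l)
    (hJJ : J * J = -diagonal χ) (hχ : ∀ k, χ k = 1 ∨ β k = 0) (s : ℝ) :
    HasMatrixDerivAt (rotationCurve 1 β J)
      (diagonal β * J * rotationCurve 1 β J s) s := by
  have hdiag (f : ℝ → Fin n → ℝ) (f' : Fin n → ℝ)
      (h : ∀ k, HasDerivAt (fun u => f u k) (f' k) s) :
      HasMatrixDerivAt (fun u => diagonal (f u)) (diagonal f') s := by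
    intro i j
    by_cases hij : i = j
    · subst hij; simpa using h i
    · simpa [diagonal_apply_ne _ hij] using hasDerivAt_const s (0 : ℝ)
  have h1 : HasMatrixDerivAt (fun u => diagonal fun k => (1 : Fin n → ℝ) k * Real.cos (u * β k))
      (diagonal fun k => -(β k * Real.sin (s * β k))) s := by
    refine hdiag _ _ fun k => ?_
    simpa [mul_comm] using (hasDerivAt_mul_const (β k)).cos (x := s)
  have h2 : HasMatrixDerivAt (fun u => diagonal fun k => Real.sin (u * β k))
      (diagonal fun k => β k * Real.cos (s * β k)) s := by
    refine hdiag _ _ fun k => ?_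
    simpa [mul_comm] using (hasDerivAt_mul_const (β k)).sin (x := s)
  have hcomm (f : ℝ → ℝ) : J * diagonal (fun k => f (β k)) = diagonal (fun k => f (β k)) * J := by
    ext k l
    rw [mul_diagonal, diagonal_mul]
    by_cases h : J k l = 0
    · simp [h]
    · rw [hJβ k l h]; ring
  have h3 := h2.mul_const J
  intro i j
  have h4 := (h1 i j).add (h3 i j)
  refine h4.congr_deriv ?_
  rw [← Matrix.add_apply]
  rw [rotationCurve, Matrix.mul_add, Matrix.mul_assoc, Matrix.mul_assoc]
  simp only [Pi.one_apply, one_mul]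
  rw [hcomm (fun b => Real.cos (s * b)), ← Matrix.mul_assoc J, hcomm (fun b => Real.sin (s * b)),
    Matrix.mul_assoc, hJJ, ← Matrix.mul_assoc, diagonal_mul_diagonal, Matrix.mul_neg,
    diagonal_mul_diagonal, Matrix.mul_neg, diagonal_mul_diagonal, diagonal_neg, add_comm]
  have hsin : (fun k => -(β k * Real.sin (s * β k))) =
      fun k => -(β k * (Real.sin (s * β k) * χ k)) := by
    funext k
    rcases hχ k with h | h <;> simp [h]
  rw [hsin]

end rotationCurve

/-- On an even number of coordinates there is a complex structure. -/
theorem exists_skew_sq_eq_neg_indicator {n : ℕ} (I : Finset (Fin n)) (hI : Even I.card) :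
    ∃ J : Matrix (Fin n) (Fin n) ℝ, Jᵀ = -J ∧ J * J = -diagonal (fun k => if k ∈ I then 1 else 0) ∧
      ∀ k l, J k l ≠ 0 → k ∈ I ∧ l ∈ I := by
  obtain ⟨m, hm⟩ := hI
  have e : I ≃ Fin m ⊕ Fin m := Fintype.equivOfCardEq (by simp [hm])
  let J₀ := Matrix.J (Fin m) ℝ
  let P : Matrix (Fin n) (Fin m ⊕ Fin m) ℝ := of fun k q => if k = (e.symm q : Fin n) then 1 else 0
  have hPP : Pᵀ * P = 1 := by
    ext q r
    simp [P, Matrix.mul_apply, Matrix.one_apply, Subtype.ext_iff.symm, eq_comm]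
  have hPP' : P * Pᵀ = diagonal (fun k => if k ∈ I then 1 else 0) := by
    ext k l
    simp only [P, Matrix.mul_apply, transpose_apply, of_apply, diagonal_apply, ite_mul, one_mul,
      zero_mul]
    rw [← e.sum_comp]
    simp only [Equiv.symm_apply_apply]
    rw [Finset.sum_coe_sort I (fun x => if k = x then if l = x then (1 : ℝ) else 0 else 0)]
    rw [Finset.sum_ite_eq]
    by_cases hk : k ∈ I <;> simp [hk, eq_comm]
  refine ⟨P * J₀ * Pᵀ, ?_, ?_, ?_⟩
  · simp only [transpose_mul, transpose_transpose, J₀, J_transpose]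
    simp [Matrix.mul_assoc]
  · rw [← hPP']
    calc P * J₀ * Pᵀ * (P * J₀ * Pᵀ) = P * J₀ * (Pᵀ * P) * J₀ * Pᵀ := by
          simp only [Matrix.mul_assoc]
      _ = P * (J₀ * J₀) * Pᵀ := by rw [hPP]; simp only [Matrix.mul_assoc, Matrix.one_mul]
      _ = _ := by simp only [J₀, J_squared]; simp
  · intro k l hkl
    constructor
    · by_contra hk
      have hP : ∀ q, P k q = 0 := fun q => by
        simp only [P, of_apply, ite_eq_right_iff]
        intro h
        exact absurd (h ▸ (e.symm q).2) hk
      apply hkl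
      simp [Matrix.mul_apply, hP]
    · by_contra hl
      have hP : ∀ q, P l q = 0 := fun q => by
        simp only [P, of_apply, ite_eq_right_iff]
        intro h
        exact absurd (h ▸ (e.symm q).2) hl
      apply hkl
      simp [Matrix.mul_apply, hP]

/-- A special orthogonal matrix whose symmetric part is diagonal is the endpoint of a
one-parameter group. -/
theorem exists_oneParameter_of_diagonal_symmPart {n : ℕ} {g T : Matrix (Fin n) (Fin n) ℝ}
    (hg : g ∈ SO n) {c : Fin n → ℝ} (hT : Tᵀ = -T) (hgT : g = diagonal c + T) :
    ∃ (γ : ℝ → Matrix (Fin n) (Fin n) ℝ) (A : Matrix (Fin n) (Fin n) ℝ), Aᵀ = -A ∧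
      γ 0 = 1 ∧ γ 1 = g ∧ (∀ s, γ s ∈ SO n) ∧ (∀ s, HasMatrixDerivAt γ (A * γ s) s) ∧
      hsq A ≤ Real.pi ^ 2 * n ∧ hsq A ≤ Real.pi ^ 2 / 4 * hsq (g - 1) := by
  have hgt : gᵀ = diagonal c - T := by
    rw [hgT, transpose_add, hT, diagonal_transpose, sub_eq_add_neg]
  have e1 := SO.mul_transpose_self hg
  have e2 := SO.transpose_mul_self hg
  rw [hgt, hgT] at e1 e2
  have hcomm : diagonal c * T = T * diagonal c := by
    have : (2 : ℝ) • (diagonal c * T - T * diagonal c) = 0 := by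
      rw [← sub_eq_zero.mpr (e2.trans e1.symm)]
      rw [two_smul]
      noncomm_ring
    exact sub_eq_zero.mp ((smul_eq_zero.mp this).resolve_left two_ne_zero)
  have hTT : T * T = -diagonal (fun k => 1 - c k ^ 2) := by
    have h1 : diagonal c * diagonal c - T * T = 1 := by
      rw [← e1, Matrix.add_mul, Matrix.mul_sub, Matrix.mul_sub, hcomm]
      abel
    rw [diagonal_mul_diagonal, ← diagonal_one] at h1
    have h2 : T * T = diagonal (fun i => c i * c i) - diagonal (fun _ => 1) := by
      rw [← h1]; abel
    rw [h2, diagonal_sub, diagonal_neg]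
    congr 1; funext k; ring
  have hTc (k l : Fin n) (h : T k l ≠ 0) : c k = c l := by
    have := congrFun (congrFun hcomm k) l
    rw [diagonal_mul, mul_diagonal, mul_comm] at this
    exact mul_left_cancel₀ h this
  have hTrow (k : Fin n) : ∑ l, T k l ^ 2 = 1 - c k ^ 2 := by
    have h1 := congrFun (congrFun hTT k) k
    simp only [Matrix.mul_apply, Matrix.neg_apply, diagonal_apply_eq] at h1
    have h2 (l : Fin n) : T l k = -T k l := congrFun (congrFun hT k) l
    simp only [h2] at h1
    rw [← neg_inj, ← h1, ← Finset.sum_neg_distrib]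
    exact Finset.sum_congr rfl fun l _ => by ring
  have hc (k : Fin n) : -1 ≤ c k ∧ c k ≤ 1 := by
    have : 0 ≤ 1 - c k ^ 2 := hTrow k ▸ Finset.sum_nonneg fun l _ => sq_nonneg _
    constructor <;> nlinarith
  have hTzero (k : Fin n) (h : c k ^ 2 = 1) (l : Fin n) : T k l = 0 := by
    have h1 : ∑ l, T k l ^ 2 = 0 := by rw [hTrow, h, sub_self]
    rw [Finset.sum_eq_zero_iff_of_nonneg fun l _ => sq_nonneg _] at h1
    simpa using h1 l (Finset.mem_univ l)
  let α : Fin n → ℝ := fun k => Real.arccos (c k)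
  have hcos (k : Fin n) : Real.cos (α k) = c k := Real.cos_arccos (hc k).1 (hc k).2
  have hsin (k : Fin n) : Real.sin (α k) ^ 2 = 1 - c k ^ 2 := by
    rw [Real.sin_sq, hcos]
  have hsin0 (k : Fin n) : Real.sin (α k) = 0 ↔ c k ^ 2 = 1 := by
    rw [← sq_eq_zero_iff, hsin, sub_eq_zero, eq_comm]
  let I : Finset (Fin n) := Finset.univ.filter fun k => c k = -1
  have hmemI (k : Fin n) : k ∈ I ↔ c k = -1 := by simp [I]
  let K : Matrix (Fin n) (Fin n) ℝ := diagonal (fun k => (Real.sin (α k))⁻¹) * T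
  have hKapp (k l : Fin n) : K k l = (Real.sin (α k))⁻¹ * T k l := diagonal_mul _ _ _ _
  have hKT (k l : Fin n) (h : K k l ≠ 0) : T k l ≠ 0 := fun h0 => h (by rw [hKapp, h0, mul_zero])
  have hKα (k l : Fin n) (h : K k l ≠ 0) : α k = α l := by
    simp only [α]; rw [hTc k l (hKT k l h)]
  have hKc (k l : Fin n) (h : K k l ≠ 0) : c k = c l := hTc k l (hKT k l h)
  have hKskew : Kᵀ = -K := by
    ext k l
    rw [transpose_apply, Matrix.neg_apply, hKapp, hKapp]
    have h2 : T l k = -T k l := congrFun (congrFun hT k) l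
    rw [h2]
    by_cases h : T k l = 0
    · simp [h]
    · have : α k = α l := by simp only [α]; rw [hTc k l h]
      rw [this]; ring
  have hsinK : diagonal (fun k => Real.sin (α k)) * K = T := by
    ext k l
    rw [diagonal_mul, hKapp]
    by_cases h : Real.sin (α k) = 0
    · rw [h, hTzero k ((hsin0 k).mp h)]; simp
    · field_simp
  have hKK : K * K = -diagonal (fun k => if Real.sin (α k) = 0 then 0 else 1) := by
    ext k l
    have h1 := congrFun (congrFun hTT k) l
    have h2 : (K * K) k l = (Real.sin (α k))⁻¹ ^ 2 * (T * T) k l := by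
      simp only [Matrix.mul_apply, Finset.mul_sum, hKapp]
      refine Finset.sum_congr rfl fun j _ => ?_
      by_cases h : T k j = 0
      · simp [h]
      · have : α k = α j := by simp only [α]; rw [hTc k j h]
        rw [this]; ring
    rw [h2, h1]
    by_cases hkl : k = l
    · subst hkl
      simp only [Matrix.neg_apply, diagonal_apply_eq, ← hsin]
      split_ifs with h
      · simp [h]
      · field_simp
    · simp [diagonal_apply_ne _ hkl]
  have hsinI (k : Fin n) (hk : k ∈ I) : Real.sin (α k) = 0 := by
    rw [hsin0, (hmemI k).mp hk]; norm_num
  have hα0 (k : Fin n) (h : Real.sin (α k) = 0) (hk : k ∉ I) : α k = 0 := by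
    rw [hsin0] at h
    have h1 : c k = 1 := (by simpa using h : c k = 1 ∨ c k = -1).resolve_right
      fun h => hk ((hmemI k).mpr h)
    simp [α, h1]
  have hgE : g = diagonal c + diagonal (fun k => Real.sin (α k)) * K := by rw [hsinK, hgT]
  -- the number of eigenvalues `-1` is even
  have hIeven : Even I.card := by
    let e : Fin n → ℝ := fun k => if k ∈ I then -1 else 1
    let β : Fin n → ℝ := fun k => if k ∈ I then 0 else α k
    have horth := rotationCurve_mul_transpose (e := e) (β := β) (J := K)
      (fun k => by simp only [e]; split_ifs <;> norm_num) hKskew (fun k l h => by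
        have h1 : k ∈ I ↔ l ∈ I := by rw [hmemI, hmemI, hKc k l h]
        simp only [β, e, h1, hKα k l h, and_self]) hKK (fun k => by
        by_cases hk : k ∈ I
        · simp [β, hk]
        · by_cases h : Real.sin (α k) = 0
          · simp [β, hα0 k h hk]
          · simp [h])
    have hdet := det_eq_of_continuous_orthogonal continuous_rotationCurve horth 0 1
    have h0 : rotationCurve e β K 0 = diagonal e := by simp [rotationCurve]
    have h1 : rotationCurve e β K 1 = g := by
      rw [hgE, rotationCurve]
      congr 2
      · funext k
        by_cases hk : k ∈ I
        · simp [e, β, hk, (hmemI k).mp hk]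
        · simp [e, β, hk, hcos]
      · congr 1
        funext k
        by_cases hk : k ∈ I
        · simp [β, hk, hsinI k hk]
        · simp [β, hk]
    rw [h0, h1, hg.2, det_diagonal, Finset.prod_ite, Finset.prod_const_one, mul_one,
      Finset.prod_const, neg_one_pow_eq_one_iff_even (by norm_num)] at hdet
    simpa using hdet
  obtain ⟨J, hJskew, hJJ, hJI⟩ := exists_skew_sq_eq_neg_indicator I hIeven
  let χ : Fin n → ℝ := fun k => (if Real.sin (α k) = 0 then 0 else 1) + if k ∈ I then 1 else 0
  have hKI (k l : Fin n) (hk : k ∈ I) : K k l = 0 := by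
    rw [hKapp, hsinI k hk]; simp
  have hKI' (k l : Fin n) (hl : l ∈ I) : K k l = 0 := by
    have h : K k l = -K l k := by
      have := congrFun (congrFun hKskew l) k
      simpa using this
    rw [h, hKI l k hl, neg_zero]
  have hKJ : K * J = 0 := by
    ext k l
    simp only [Matrix.mul_apply, Matrix.zero_apply]
    refine Finset.sum_eq_zero fun j _ => ?_
    by_cases h : J j l = 0
    · simp [h]
    · rw [hKI' k j (hJI j l h).1, zero_mul]
  have hJK : J * K = 0 := by
    ext k l
    simp only [Matrix.mul_apply, Matrix.zero_apply]
    refine Finset.sum_eq_zero fun j _ => ?_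
    by_cases h : J k j = 0
    · simp [h]
    · rw [hKI j l (hJI k j h).2, mul_zero]
  have hLskew : (K + J)ᵀ = -(K + J) := by
    rw [transpose_add, hKskew, hJskew, neg_add]
  have hLL : (K + J) * (K + J) = -diagonal χ := by
    rw [Matrix.add_mul, Matrix.mul_add, Matrix.mul_add, hKJ, hJK, hKK, hJJ, add_zero, zero_add,
      ← neg_add, diagonal_add]
  have hLα (k l : Fin n) (h : (K + J) k l ≠ 0) : α k = α l := by
    by_cases hK : K k l = 0
    · have hJ : J k l ≠ 0 := by simpa [hK] using h
      simp only [α, (hmemI k).mp (hJI k l hJ).1, (hmemI l).mp (hJI k l hJ).2]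
    · exact hKα k l hK
  have hχ (k : Fin n) : χ k = 1 ∨ α k = 0 := by
    by_cases hk : k ∈ I
    · left; simp [χ, hk, hsinI k hk]
    · by_cases h : Real.sin (α k) = 0
      · right; exact hα0 k h hk
      · left; simp [χ, h, hk]
  have horth := rotationCurve_mul_transpose (e := 1) (β := α) (fun k => by simp) hLskew
    (fun k l h => ⟨hLα k l h, rfl⟩) hLL hχ
  have h0 : rotationCurve 1 α (K + J) 0 = 1 := by simp [rotationCurve]
  have h1 : rotationCurve 1 α (K + J) 1 = g := by
    have hsinJ : diagonal (fun k => Real.sin (α k)) * J = 0 := by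
      ext k l
      rw [diagonal_mul]
      by_cases h : J k l = 0
      · simp [h]
      · simp [hsinI k (hJI k l h).1]
    simp only [rotationCurve, one_mul, Pi.one_apply, hcos]
    rw [Matrix.mul_add, hsinJ, add_zero, ← hgE]
  have hnorm : hsq (diagonal α * (K + J)) ≤ ∑ k, α k ^ 2 := by
    refine Finset.sum_le_sum fun k _ => ?_
    have h2 : ∑ l, (K + J) k l ^ 2 = χ k := by
      have h3 := congrFun (congrFun hLL k) k
      simp only [Matrix.mul_apply, Matrix.neg_apply, diagonal_apply_eq] at h3
      rw [← neg_inj, ← h3, ← Finset.sum_neg_distrib]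
      refine Finset.sum_congr rfl fun l _ => ?_
      have h4 : (K + J) l k = -(K + J) k l := congrFun (congrFun hLskew k) l
      rw [h4]; ring
    simp only [diagonal_mul, mul_pow]
    rw [← Finset.mul_sum, h2]
    rcases hχ k with h | h <;> simp [h]
  have hπ (k : Fin n) : 0 ≤ α k ∧ α k ≤ Real.pi :=
    ⟨Real.arccos_nonneg _, Real.arccos_le_pi _⟩
  refine ⟨rotationCurve 1 α (K + J), diagonal α * (K + J), ?_, h0, h1, fun s => ⟨horth s, ?_⟩,
    hasMatrixDerivAt_rotationCurve hLα hLL hχ, hnorm.trans ?_, hnorm.trans ?_⟩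
  · ext k l
    have h4 : (K + J) l k = -(K + J) k l := congrFun (congrFun hLskew k) l
    rw [transpose_apply, Matrix.neg_apply, diagonal_mul, diagonal_mul, h4]
    by_cases h : (K + J) k l = 0
    · simp [h]
    · rw [hLα k l h]; ring
  · rw [det_eq_of_continuous_orthogonal continuous_rotationCurve horth s 0, h0, det_one]
  · calc ∑ k, α k ^ 2 ≤ ∑ _k : Fin n, Real.pi ^ 2 :=
          Finset.sum_le_sum fun k _ => pow_le_pow_left₀ (hπ k).1 (hπ k).2 2
      _ = Real.pi ^ 2 * n := by simp [mul_comm]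
  · rw [hsq, Finset.mul_sum]
    refine Finset.sum_le_sum fun k _ => ?_
    have h5 : ∑ l, (g - 1) k l ^ 2 = 2 - 2 * c k := by
      have hTkk : T k k = 0 := by
        have : T k k = -T k k := congrFun (congrFun hT k) k
        linarith
      have h6 (l : Fin n) : (g - 1) k l ^ 2 = (if k = l then (c k - 1) ^ 2 else 0) + T k l ^ 2 := by
        rw [hgT]
        by_cases hkl : k = l
        · subst hkl; simp [hTkk]
        · simp [hkl]
      simp only [h6, Finset.sum_add_distrib, hTrow]
      simp only [Finset.sum_ite_eq, Finset.mem_univ, if_true]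
      ring
    rw [h5, ← hcos]
    have h7 := Real.cos_le_one_sub_mul_cos_sq (x := α k)
      (by rw [abs_of_nonneg (hπ k).1]; exact (hπ k).2)
    have hp : 0 < Real.pi ^ 2 := by positivity
    have h8 : Real.pi ^ 2 / 4 * (2 - 2 * (1 - 2 / Real.pi ^ 2 * α k ^ 2)) = α k ^ 2 := by
      field_simp
      ring
    rw [← h8]
    gcongr

/-- Every special orthogonal matrix is the endpoint of a one-parameter group of controlled
speed. -/
theorem exists_oneParameter {n : ℕ} {g : Matrix (Fin n) (Fin n) ℝ} (hg : g ∈ SO n) :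
    ∃ (γ : ℝ → Matrix (Fin n) (Fin n) ℝ) (A : Matrix (Fin n) (Fin n) ℝ), Aᵀ = -A ∧
      γ 0 = 1 ∧ γ 1 = g ∧ (∀ s, γ s ∈ SO n) ∧ (∀ s, HasMatrixDerivAt γ (A * γ s) s) ∧
      hsq A ≤ Real.pi ^ 2 * n ∧ hsq A ≤ Real.pi ^ 2 / 4 * hsq (g - 1) := by
  have hS : ((2 : ℝ)⁻¹ • (g + gᵀ)).IsHermitian := by
    rw [IsHermitian, conjTranspose_eq_transpose_of_trivial, transpose_smul, transpose_add,
      transpose_transpose, add_comm]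
  obtain ⟨U, c, hU, hSU⟩ : ∃ (U : Matrix (Fin n) (Fin n) ℝ) (c : Fin n → ℝ), U * Uᵀ = 1 ∧
      Uᵀ * ((2 : ℝ)⁻¹ • (g + gᵀ)) * U = diagonal c := by
    refine ⟨hS.eigenvectorUnitary, hS.eigenvalues, ?_, ?_⟩
    · exact (mem_orthogonalGroup_iff (Fin n) ℝ).mp hS.eigenvectorUnitary.2
    · have := hS.conjStarAlgAut_star_eigenvectorUnitary
      simpa [Unitary.conjStarAlgAut_apply, star_eq_conjTranspose] using this
  have hU' : Uᵀ * U = 1 := mul_eq_one_comm.mp hU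
  have hconj (V X : Matrix (Fin n) (Fin n) ℝ) (hV : V * Vᵀ = 1) (hX : X ∈ SO n) :
      Vᵀ * X * V ∈ SO n := by
    have hV' : Vᵀ * V = 1 := mul_eq_one_comm.mp hV
    constructor
    · calc Vᵀ * X * V * (Vᵀ * X * V)ᵀ = Vᵀ * (X * (V * Vᵀ) * Xᵀ) * V := by
            simp only [transpose_mul, transpose_transpose, Matrix.mul_assoc]
        _ = 1 := by rw [hV, Matrix.mul_one, hX.1, Matrix.mul_one, hV']
    · rw [det_mul, det_mul, hX.2, mul_one, ← det_mul, hV', det_one]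
  have hUU (X : Matrix (Fin n) (Fin n) ℝ) : U * (Uᵀ * X * U) * Uᵀ = X := by
    calc U * (Uᵀ * X * U) * Uᵀ = (U * Uᵀ) * X * (U * Uᵀ) := by simp only [Matrix.mul_assoc]
      _ = X := by rw [hU, Matrix.one_mul, Matrix.mul_one]
  obtain ⟨γ, A, hA, h0, h1, hSO, hderiv, hb1, hb2⟩ :=
    exists_oneParameter_of_diagonal_symmPart (g := Uᵀ * g * U)
      (T := Uᵀ * ((2 : ℝ)⁻¹ • (g - gᵀ)) * U) (hconj U g hU hg) (c := c) (by
        simp only [transpose_mul, transpose_transpose, transpose_smul, transpose_sub]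
        rw [← neg_sub g gᵀ, smul_neg, Matrix.neg_mul, Matrix.mul_neg, Matrix.mul_assoc]) (by
        rw [← hSU, ← Matrix.add_mul, ← Matrix.mul_add, ← smul_add]
        congr 2
        rw [add_add_sub_cancel, ← two_smul ℝ g, smul_smul]
        simp)
  have hhs (X : Matrix (Fin n) (Fin n) ℝ) : hsq (U * X * Uᵀ) = hsq X := by
    rw [hsq_mul_right _ (by rwa [transpose_transpose]), hsq_mul_left _ hU']
  refine ⟨fun s => U * γ s * Uᵀ, U * A * Uᵀ, ?_, ?_, ?_, fun s => ?_, fun s => ?_, ?_, ?_⟩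
  · simp only [transpose_mul, transpose_transpose, hA]
    simp [Matrix.mul_assoc]
  · simp only [h0, Matrix.mul_one, hU]
  · simp only [h1, hUU]
  · have := hconj Uᵀ (γ s) (by rwa [transpose_transpose]) (hSO s)
    rwa [transpose_transpose] at this
  · refine (((hderiv s).const_mul U).mul_const Uᵀ).congr_deriv ?_
    calc U * (A * γ s) * Uᵀ = U * A * 1 * γ s * Uᵀ := by
          simp only [Matrix.mul_assoc, Matrix.one_mul]
      _ = _ := by rw [← hU']; simp only [Matrix.mul_assoc]
  · rw [hhs]; exact hb1
  · rw [hhs]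
    refine hb2.trans_eq ?_
    rw [← hhs (Uᵀ * g * U - 1), Matrix.mul_sub, Matrix.sub_mul, hUU, Matrix.mul_one, hU]

theorem sq_intervalIntegral_le {f : ℝ → ℝ} (hf : Continuous f) {a b : ℝ} (hab : a ≤ b) :
    (∫ u in a..b, f u) ^ 2 ≤ (b - a) * ∫ u in a..b, f u ^ 2 := by
  rcases hab.eq_or_lt with rfl | hlt
  · simp
  have hpos : 0 < b - a := sub_pos.mpr hlt
  set m := (∫ u in a..b, f u) / (b - a) with hm
  have hmb : ∫ u in a..b, f u = m * (b - a) := by rw [hm]; field_simp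
  have h1 : 0 ≤ ∫ u in a..b, (f u - m) ^ 2 :=
    intervalIntegral.integral_nonneg hab fun u _ => sq_nonneg _
  have h2 : ∫ u in a..b, (f u - m) ^ 2 =
      (∫ u in a..b, f u ^ 2) - 2 * m * (∫ u in a..b, f u) + m ^ 2 * (b - a) := by
    have h3 : ∀ u, (f u - m) ^ 2 = f u ^ 2 - 2 * m * f u + m ^ 2 := fun u => by ring
    simp only [h3]
    rw [intervalIntegral.integral_add, intervalIntegral.integral_sub,
      intervalIntegral.integral_const_mul, intervalIntegral.integral_const]
    · simp [mul_comm]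
    all_goals exact Continuous.intervalIntegrable (by fun_prop) _ _
  rw [h2, hmb] at h1
  rw [hmb]
  nlinarith

section length

variable {n : ℕ} {Z B : ℝ → Matrix (Fin n) (Fin n) ℝ}

theorem hsq_sub_le_mul_integral (hB : Continuous B) (hZ : ∀ s, Z s ∈ SO n)
    (hd : ∀ s, HasMatrixDerivAt Z (B s * Z s) s) {a b : ℝ} (hab : a ≤ b) :
    hsq (Z b - Z a) ≤ (b - a) * ∫ u in a..b, hsq (B u) := by
  have hZc : Continuous Z := continuous_of_hasMatrixDerivAt hd
  have hV (i j : Fin n) : Continuous fun s => (B s * Z s) i j :=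
    (hB.matrix_mul hZc).matrix_elem i j
  have hV2 (i j : Fin n) : Continuous fun s => (B s * Z s) i j ^ 2 := (hV i j).pow 2
  have hintegral : ∫ u in a..b, hsq (B u) = ∑ i, ∑ j, ∫ u in a..b, (B u * Z u) i j ^ 2 := by
    have h1 : ∀ u, hsq (B u) = ∑ i, ∑ j, (B u * Z u) i j ^ 2 := fun u =>
      (hsq_mul_right (B u) (SO.mul_transpose_self (hZ u))).symm
    simp only [h1]
    rw [intervalIntegral.integral_finsetSum fun i _ => Continuous.intervalIntegrable
      (continuous_finsetSum _ fun j _ => hV2 i j) _ _]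
    refine Finset.sum_congr rfl fun i _ => ?_
    rw [intervalIntegral.integral_finsetSum fun j _ => Continuous.intervalIntegrable
      (hV2 i j) _ _]
  rw [hintegral, hsq, Finset.mul_sum]
  refine Finset.sum_le_sum fun i _ => ?_
  rw [Finset.mul_sum]
  refine Finset.sum_le_sum fun j _ => ?_
  have h2 : (Z b - Z a) i j = ∫ u in a..b, (B u * Z u) i j := by
    rw [intervalIntegral.integral_eq_sub_of_hasDerivAt (fun u _ => hd u i j)
      ((hV i j).intervalIntegrable _ _)]
    rfl
  rw [h2]
  exact sq_intervalIntegral_le (hV i j) hab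

theorem sum_fin_succ_sub_castSucc (F : ℝ → ℝ) {k : ℕ} (t : Fin (k + 1) → ℝ) :
    ∑ i : Fin k, (F (t i.succ) - F (t i.castSucc)) = F (t (Fin.last k)) - F (t 0) := by
  rw [Finset.sum_sub_distrib]
  have h1 := Fin.sum_univ_succ fun i => F (t i)
  have h2 := Fin.sum_univ_castSucc fun i => F (t i)
  linarith

theorem pathLengthE_le_sqrt_energy (hB : Continuous B) (hZ : ∀ s, Z s ∈ SO n)
    (hd : ∀ s, HasMatrixDerivAt Z (B s * Z s) s) :
    pathLengthE hsDist Z ≤ ENNReal.ofReal (Real.sqrt (∫ u in (0 : ℝ)..1, hsq (B u))) := by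
  have hintegral (a b : ℝ) : IntervalIntegrable (fun u => hsq (B u)) volume a b :=
    (continuous_hsq.comp hB).intervalIntegrable _ _
  let F : ℝ → ℝ := fun s => ∫ u in (0 : ℝ)..s, hsq (B u)
  have hF (a b : ℝ) : ∫ u in a..b, hsq (B u) = F b - F a :=
    (intervalIntegral.integral_interval_sub_left (hintegral _ _) (hintegral _ _)).symm
  refine iSup_le fun k => iSup_le fun t => iSup_le fun ht => iSup_le fun h0 => iSup_le fun h1 => ?_
  have hmono (i : Fin k) : t i.castSucc ≤ t i.succ := ht i.castSucc_le_succ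
  have hFnn (i : Fin k) : 0 ≤ F (t i.succ) - F (t i.castSucc) := by
    rw [← hF]
    exact intervalIntegral.integral_nonneg (hmono i) fun u _ => hsq_nonneg _
  have htnn (i : Fin k) : 0 ≤ t i.succ - t i.castSucc := sub_nonneg.mpr (hmono i)
  calc ∑ i : Fin k, hsDist (Z (t i.castSucc)) (Z (t i.succ))
      ≤ ∑ i : Fin k, ENNReal.ofReal (Real.sqrt (t i.succ - t i.castSucc) *
          Real.sqrt (F (t i.succ) - F (t i.castSucc))) := by
        refine Finset.sum_le_sum fun i _ => ENNReal.ofReal_le_ofReal ?_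
        rw [← Real.sqrt_mul (htnn i), trace_transpose_mul_self_eq_hsq]
        refine Real.sqrt_le_sqrt ?_
        rw [← hF]
        refine le_trans (le_of_eq ?_) (hsq_sub_le_mul_integral hB hZ hd (hmono i))
        simp only [hsq, Matrix.sub_apply]
        exact Finset.sum_congr rfl fun _ _ => Finset.sum_congr rfl fun _ _ => by ring
    _ = ENNReal.ofReal (∑ i : Fin k, Real.sqrt (t i.succ - t i.castSucc) *
          Real.sqrt (F (t i.succ) - F (t i.castSucc))) :=
        (ENNReal.ofReal_sum_of_nonneg fun i _ => by positivity).symm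
    _ ≤ ENNReal.ofReal (Real.sqrt (∫ u in (0 : ℝ)..1, hsq (B u))) := by
        refine ENNReal.ofReal_le_ofReal ?_
        refine (Real.sum_sqrt_mul_sqrt_le _ htnn hFnn).trans_eq ?_
        rw [sum_fin_succ_sub_castSucc F, sum_fin_succ_sub_castSucc (fun s => s), h0, h1, ← hF]
        simp

theorem DSO_rpow_two_le_energy (hB : Continuous B) (hZ : ∀ s, Z s ∈ SO n)
    (hd : ∀ s, HasMatrixDerivAt Z (B s * Z s) s) :
    DSO n (Z 0) (Z 1) ^ (2 : ℝ) ≤ ∫⁻ s in Set.Icc (0 : ℝ) 1, ENNReal.ofReal (hsq (B s)) := by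
  have h1 : DSO n (Z 0) (Z 1) ≤ pathLengthE hsDist Z :=
    iInf_le_of_le Z <| iInf_le_of_le (continuous_of_hasMatrixDerivAt hd).continuousOn <|
      iInf_le_of_le (fun s _ => hZ s) <| iInf_le_of_le rfl <| iInf_le_of_le rfl le_rfl
  have hnn : 0 ≤ ∫ u in (0 : ℝ)..1, hsq (B u) :=
    intervalIntegral.integral_nonneg zero_le_one fun u _ => hsq_nonneg _
  have hc : Continuous fun s => hsq (B s) := continuous_hsq.comp hB
  calc DSO n (Z 0) (Z 1) ^ (2 : ℝ)
      ≤ ENNReal.ofReal (Real.sqrt (∫ u in (0 : ℝ)..1, hsq (B u))) ^ (2 : ℝ) := by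
        gcongr
        exact h1.trans (pathLengthE_le_sqrt_energy hB hZ hd)
    _ = ENNReal.ofReal (∫ u in (0 : ℝ)..1, hsq (B u)) := by
        rw [ENNReal.ofReal_rpow_of_nonneg (Real.sqrt_nonneg _) zero_le_two, Real.rpow_two,
          Real.sq_sqrt hnn]
    _ = ∫⁻ s in Set.Icc (0 : ℝ) 1, ENNReal.ofReal (hsq (B s)) := by
        rw [intervalIntegral.integral_of_le zero_le_one, ← integral_Icc_eq_integral_Ioc,
          ofReal_integral_eq_lintegral_ofReal (hc.integrableOn_Icc)
            (Eventually.of_forall fun s => hsq_nonneg _)]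

end length

/-- The infinitesimal generator of the rotations `R(i,j,θ)`. -/
def kacGen {n : ℕ} (i j : Fin n) : Matrix (Fin n) (Fin n) ℝ :=
  of fun k l => (if k = j ∧ l = i then 1 else 0) - (if k = i ∧ l = j then 1 else 0)

/-- The indicator function of the pair `{i, j}`. -/
def pairInd {n : ℕ} (i j : Fin n) (k : Fin n) : ℝ := if k = i ∨ k = j then 1 else 0

section kacRot

variable {n : ℕ} {i j : Fin n}

theorem kacGen_transpose : (kacGen i j)ᵀ = -kacGen i j := by
  ext k l
  simp only [kacGen, transpose_apply, of_apply, Matrix.neg_apply, neg_sub, and_comm]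

theorem pairInd_eq_of_kacGen_ne_zero {k l : Fin n} (h : kacGen i j k l ≠ 0) :
    pairInd i j k = 1 ∧ pairInd i j l = 1 := by
  simp only [kacGen, of_apply] at h
  by_cases h1 : k = j ∧ l = i
  · simp [pairInd, h1.1, h1.2]
  · by_cases h2 : k = i ∧ l = j
    · simp [pairInd, h2.1, h2.2]
    · simp [h1, h2] at h

theorem kacGen_mul_self (hij : i ≠ j) : kacGen i j * kacGen i j = -diagonal (pairInd i j) := by
  ext k l
  simp only [Matrix.mul_apply, kacGen, of_apply, Matrix.neg_apply, diagonal_apply, pairInd,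
    sub_mul, mul_sub, Finset.sum_sub_distrib, ite_and, ite_mul, mul_ite, one_mul,
    zero_mul, mul_zero]
  by_cases h1 : k = i <;> by_cases h2 : k = j <;> by_cases h3 : l = i <;> by_cases h4 : l = j <;>
    simp_all [eq_comm]

theorem diagonal_pairInd_mul_kacGen : diagonal (pairInd i j) * kacGen i j = kacGen i j := by
  ext k l
  rw [diagonal_mul]
  by_cases h : kacGen i j k l = 0
  · simp [h]
  · rw [(pairInd_eq_of_kacGen_ne_zero h).1, one_mul]

theorem kacRot_eq_rotationCurve (hij : i ≠ j) :
    kacRot i j = rotationCurve 1 (pairInd i j) (kacGen i j) := by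
  funext θ
  ext k l
  simp only [kacRot, rotationCurve, Matrix.add_apply, diagonal_mul, diagonal_apply, of_apply,
    pairInd, kacGen, Pi.one_apply, one_mul]
  by_cases h1 : k = i <;> by_cases h2 : k = j <;> by_cases h3 : l = i <;> by_cases h4 : l = j <;>
    simp_all [eq_comm]

theorem kacRot_mem_SO (hij : i ≠ j) (θ : ℝ) : kacRot i j θ ∈ SO n := by
  rw [kacRot_eq_rotationCurve hij]
  have horth := rotationCurve_mul_transpose (e := 1) (fun k => by simp)
    (kacGen_transpose (i := i) (j := j)) (fun k l h => by
      have := pairInd_eq_of_kacGen_ne_zero h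
      exact ⟨this.1.trans this.2.symm, rfl⟩) (kacGen_mul_self hij)
    (fun k => by simp only [pairInd]; split_ifs <;> simp)
  refine ⟨horth θ, ?_⟩
  rw [det_eq_of_continuous_orthogonal continuous_rotationCurve horth θ 0]
  simp [rotationCurve]

theorem hasMatrixDerivAt_kacRot (hij : i ≠ j) (θ : ℝ) :
    HasMatrixDerivAt (kacRot i j) (kacGen i j * kacRot i j θ) θ := by
  have h := hasMatrixDerivAt_rotationCurve (fun k l h => by
      have := pairInd_eq_of_kacGen_ne_zero h
      exact this.1.trans this.2.symm) (kacGen_mul_self hij)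
    (fun k => by simp only [pairInd]; split_ifs <;> simp) θ
  rwa [diagonal_pairInd_mul_kacGen, ← kacRot_eq_rotationCurve hij] at h

theorem continuous_kacRot (hij : i ≠ j) : Continuous (kacRot i j) := by
  rw [kacRot_eq_rotationCurve hij]
  exact continuous_rotationCurve

theorem kacRot_periodic (θ : ℝ) : kacRot i j (θ + 2 * Real.pi) = kacRot i j θ := by
  simp [kacRot]

theorem kacGen_mul_kacRot (hij : i ≠ j) (θ : ℝ) :
    kacGen i j * kacRot i j θ = kacRot i j θ * kacGen i j := by
  have hcomm (f : ℝ → ℝ) : kacGen i j * diagonal (fun k => f (pairInd i j k)) =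
      diagonal (fun k => f (pairInd i j k)) * kacGen i j := by
    ext k l
    rw [mul_diagonal, diagonal_mul]
    by_cases h : kacGen i j k l = 0
    · simp [h]
    · rw [(pairInd_eq_of_kacGen_ne_zero h).1, (pairInd_eq_of_kacGen_ne_zero h).2, mul_comm]
  rw [kacRot_eq_rotationCurve hij, rotationCurve]
  simp only [Pi.one_apply, one_mul]
  rw [Matrix.mul_add, Matrix.add_mul, hcomm (fun b => Real.cos (θ * b)), ← Matrix.mul_assoc,
    hcomm (fun b => Real.sin (θ * b))]

theorem hsq_sub_smul_kacGen (hij : i ≠ j) {A : Matrix (Fin n) (Fin n) ℝ} (hA : Aᵀ = -A) :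
    hsq (A - A j i • kacGen i j) = hsq A - 2 * A j i ^ 2 := by
  have hij' : A i j = -A j i := congrFun (congrFun hA j) i
  have h (k l : Fin n) : (A - A j i • kacGen i j) k l ^ 2 = A k l ^ 2
      + (if k = j then if l = i then A j i ^ 2 - 2 * A j i * A k l else 0 else 0)
      + (if k = i then if l = j then A j i ^ 2 + 2 * A j i * A k l else 0 else 0) := by
    simp only [kacGen, Matrix.sub_apply, Matrix.smul_apply, of_apply, smul_eq_mul, ite_and]
    by_cases h1 : k = j
    · have h2 : k ≠ i := fun h => hij (h.symm.trans h1)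
      by_cases h3 : l = i
      · simp only [h1, h3, if_true, if_neg hij.symm]; ring
      · simp [h1, h3, hij.symm]
    · by_cases h2 : k = i
      · by_cases h3 : l = j
        · simp only [h2, h3, if_true, if_neg hij]; ring
        · simp [h2, h3, hij]
      · simp [h1, h2]
  have hin (k : Fin n) (p : Prop) [Decidable p] (f : Fin n → ℝ) :
      (∑ l, if p then f l else 0) = if p then ∑ l, f l else 0 := by
    split_ifs <;> simp
  simp only [hsq, h, Finset.sum_add_distrib]
  simp only [hin j, Finset.sum_ite_eq', Finset.mem_univ, if_true, hij']
  ring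

theorem sum_pairs_sq_eq_hsq {A : Matrix (Fin n) (Fin n) ℝ} (hA : Aᵀ = -A) :
    ∑ p ∈ pairs n, 2 * A p.2 p.1 ^ 2 = hsq A := by
  have hs (k l : Fin n) : A k l = -A l k := congrFun (congrFun hA l) k
  have h (k l : Fin n) : A k l ^ 2 = (if k < l then A l k ^ 2 else 0) +
      (if l < k then A k l ^ 2 else 0) := by
    rcases lt_trichotomy k l with h | h | h
    · rw [if_pos h, if_neg h.asymm, hs k l]; ring
    · subst h
      have : A k k = 0 := by linarith [hs k k]
      simp [this]
    · rw [if_neg h.asymm, if_pos h, zero_add]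
  rw [pairs, Finset.sum_filter, ← Finset.univ_product_univ, Finset.sum_product]
  simp only [hsq]
  rw [Finset.sum_congr rfl fun k _ => Finset.sum_congr rfl fun l _ => h k l]
  simp only [Finset.sum_add_distrib]
  rw [Finset.sum_comm (f := fun k l => if l < k then A k l ^ 2 else 0), ← Finset.sum_add_distrib]
  refine Finset.sum_congr rfl fun k _ => ?_
  rw [← Finset.sum_add_distrib]
  refine Finset.sum_congr rfl fun l _ => ?_
  split_ifs <;> ring

theorem card_pairs (n : ℕ) : (pairs n).card = n.choose 2 := by
  rw [pairs, Finset.card_filter, ← Finset.univ_product_univ, Finset.sum_product_right]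
  simp only [← Finset.card_filter]
  have (l : Fin n) : (Finset.univ.filter fun k : Fin n => k < l).card = l := by
    rw [show (Finset.univ.filter fun k : Fin n => k < l) = Finset.Iio l by ext; simp,
      Fin.card_Iio]
  simp only [this]
  rw [Fin.sum_univ_eq_sum_range (fun i => i) n, Finset.sum_range_id, Nat.choose_two_right]

end kacRot

instance : IsProbabilityMeasure uniformAngle := ⟨by
  have h : ENNReal.ofReal (2 * Real.pi) ≠ 0 := by simp [Real.pi_pos]
  simp only [uniformAngle, Measure.smul_apply, Measure.restrict_apply_univ, Real.volume_Icc,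
    sub_zero, smul_eq_mul]
  exact ENNReal.inv_mul_cancel h ENNReal.ofReal_ne_top⟩

theorem lintegral_uniformAngle_sub {f : ℝ → ℝ≥0∞}
    (hper : Function.Periodic f (2 * Real.pi)) (c : ℝ) :
    ∫⁻ θ, f (θ - c) ∂uniformAngle = ∫⁻ θ, f θ ∂uniformAngle := by
  simp only [uniformAngle, lintegral_smul_measure, ← Measure.restrict_congr_set Ioc_ae_eq_Icc]
  congr 1
  have hshift : ∫⁻ θ in Set.Ioc 0 (2 * Real.pi), f (θ - c) =
      ∫⁻ θ in Set.Ioc (-c) (-c + 2 * Real.pi), f θ := by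
    rw [← lintegral_indicator measurableSet_Ioc, ← lintegral_indicator measurableSet_Ioc,
      ← lintegral_sub_right_eq_self (Set.indicator (Set.Ioc (-c) _) f) c]
    refine lintegral_congr fun θ => ?_
    simp only [Set.indicator, Set.mem_Ioc]
    congr 1
    ext
    constructor <;> rintro ⟨_, _⟩ <;> constructor <;> linarith
  rw [hshift]
  have h := (isAddFundamentalDomain_Ioc Real.two_pi_pos (-c)).setLIntegral_eq
    (isAddFundamentalDomain_Ioc Real.two_pi_pos 0) f ?_
  · simpa using h
  · rintro ⟨g, hg⟩ x
    obtain ⟨k, rfl⟩ := AddSubgroup.mem_zmultiples_iff.mp hg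
    change f (k • (2 * Real.pi) + x) = f x
    rw [add_comm]
    exact hper.zsmul k x

/-- The uniform probability measure on the pairs of indices. -/
def pairLaw (n : ℕ) : Measure (pairs n) := (n.choose 2 : ℝ≥0∞)⁻¹ • Measure.count

theorem lintegral_pairLaw {n : ℕ} (f : pairs n → ℝ≥0∞) :
    ∫⁻ p, f p ∂pairLaw n = (n.choose 2 : ℝ≥0∞)⁻¹ * ∑ p, f p := by
  rw [pairLaw, lintegral_smul_measure, lintegral_count, tsum_fintype, smul_eq_mul]

theorem isProbabilityMeasure_pairLaw {n : ℕ} (hn : 2 ≤ n) : IsProbabilityMeasure (pairLaw n) := ⟨by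
  have h : (n.choose 2 : ℝ≥0∞) ≠ 0 := by
    exact_mod_cast (Nat.choose_pos hn).ne'
  rw [← lintegral_one, lintegral_pairLaw]
  simp only [Finset.sum_const, Finset.card_univ, Fintype.card_coe, card_pairs, nsmul_eq_mul,
    mul_one]
  exact ENNReal.inv_mul_cancel h (ENNReal.natCast_ne_top _)⟩

instance (n : ℕ) : SFinite (pairLaw n) := by unfold pairLaw; infer_instance

theorem ne_of_pairs {n : ℕ} (p : pairs n) : p.1.1 ≠ p.1.2 :=
  (Finset.mem_filter.mp p.2).2.ne

theorem measurable_kacRot_pairs (n : ℕ) :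
    Measurable (fun z : pairs n × ℝ => kacRot z.1.1.1 z.1.1.2 z.2) :=
  measurable_from_prod_countable_right fun p => (continuous_kacRot (ne_of_pairs p)).measurable

/-- The law of the random rotation performed at each step of Kac's walk. -/
def stepLaw (n : ℕ) : Measure (Matrix (Fin n) (Fin n) ℝ) :=
  ((pairLaw n).prod uniformAngle).map fun z => kacRot z.1.1.1 z.1.1.2 z.2

theorem isProbabilityMeasure_stepLaw {n : ℕ} (hn : 2 ≤ n) : IsProbabilityMeasure (stepLaw n) := by
  have := isProbabilityMeasure_pairLaw hn
  exact Measure.isProbabilityMeasure_map (measurable_kacRot_pairs n).aemeasurable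

theorem lintegral_stepLaw {n : ℕ} {f : Matrix (Fin n) (Fin n) ℝ → ℝ≥0∞} (hf : Measurable f) :
    ∫⁻ r, f r ∂stepLaw n = ∫⁻ p, ∫⁻ θ, f (kacRot p.1.1 p.1.2 θ) ∂uniformAngle ∂pairLaw n := by
  rw [stepLaw, lintegral_map hf (measurable_kacRot_pairs n),
    lintegral_prod]
  exact (hf.comp (measurable_kacRot_pairs n)).aemeasurable

theorem lintegral_kacKernel {n : ℕ} (x : Matrix (Fin n) (Fin n) ℝ)
    {f : Matrix (Fin n) (Fin n) ℝ → ℝ≥0∞} (hf : Measurable f) :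
    ∫⁻ y, f y ∂kacKernel n x = ∫⁻ r, f (r * x) ∂stepLaw n := by
  rw [lintegral_stepLaw (f := fun r => f (r * x)) (hf.comp (measurable_mul_const x)),
    lintegral_pairLaw, kacKernel,
    lintegral_smul_measure, lintegral_finsetSum_measure, smul_eq_mul, ← Finset.sum_coe_sort]
  congr 1
  refine Finset.sum_congr rfl fun p _ => ?_
  exact lintegral_map hf
    ((measurable_mul_const x).comp (continuous_kacRot (ne_of_pairs p)).measurable)

theorem measurable_kacKernel {n : ℕ} (hn : 2 ≤ n) : Measurable (kacKernel n) := by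
  have := isProbabilityMeasure_stepLaw hn
  refine Measure.measurable_of_measurable_coe _ fun s hs => ?_
  have h (x) : kacKernel n x s = ∫⁻ r, s.indicator 1 (r * x) ∂stepLaw n := by
    rw [← lintegral_kacKernel x (measurable_one.indicator hs), lintegral_indicator_one hs]
  simp only [h]
  exact Measurable.lintegral_prod_right' (f := fun z => s.indicator 1 (z.2 * z.1))
    ((measurable_one.indicator hs).comp (measurable_snd.mul measurable_fst))

/-- The law of the product of `t` independent random rotations. -/
def iterStepLaw (n : ℕ) : ℕ → Measure (Matrix (Fin n) (Fin n) ℝ)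
  | 0 => Measure.dirac 1
  | t + 1 => stepLaw n ∗ₘ iterStepLaw n t

theorem isProbabilityMeasure_iterStepLaw {n : ℕ} (hn : 2 ≤ n) (t : ℕ) :
    IsProbabilityMeasure (iterStepLaw n t) := by
  have := isProbabilityMeasure_stepLaw hn
  induction t with
  | zero => unfold iterStepLaw; infer_instance
  | succ t ih => unfold iterStepLaw; infer_instance

theorem kernelIterate_kacKernel {n : ℕ} (hn : 2 ≤ n) (μ : Measure (Matrix (Fin n) (Fin n) ℝ))
    [IsProbabilityMeasure μ] (t : ℕ) :
    kernelIterate (kacKernel n) t μ = iterStepLaw n t ∗ₘ μ := by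
  have := isProbabilityMeasure_stepLaw hn
  induction t with
  | zero => simp [kernelIterate, iterStepLaw]
  | succ t ih =>
    have := isProbabilityMeasure_iterStepLaw hn t
    rw [kernelIterate, ih, iterStepLaw, Measure.mconv_assoc]
    refine Measure.ext_of_lintegral _ fun f hf => ?_
    rw [Measure.lintegral_bind (measurable_kacKernel hn).aemeasurable hf.aemeasurable,
      Measure.lintegral_mconv hf]
    simp only [lintegral_kacKernel _ hf]
    exact lintegral_lintegral_swap
      (hf.comp (measurable_snd.mul measurable_fst)).aemeasurable

theorem measurable_intervalIntegral_of_continuous {Ω : Type*} [MeasurableSpace Ω]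
    {a : Ω → ℝ → ℝ} (ha : Measurable (Function.uncurry a)) (hc : ∀ ω, Continuous (a ω)) :
    Measurable (fun z : Ω × ℝ => ∫ u in (0 : ℝ)..z.2, a z.1 u) := by
  have h : Measurable (Function.uncurry fun (s : ℝ) (ω : Ω) => ∫ u in (0 : ℝ)..s, a ω u) := by
    refine measurable_uncurry_of_continuous_of_measurable
      (fun ω => intervalIntegral.continuous_primitive
        (fun _ _ => (hc ω).intervalIntegrable _ _) 0) fun s => ?_
    unfold intervalIntegral
    exact (ha.stronglyMeasurable.integral_prod_right (ν := volume.restrict (Set.Ioc 0 s))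
      |>.measurable).sub (ha.stronglyMeasurable.integral_prod_right
        (ν := volume.restrict (Set.Ioc s 0)) |>.measurable)
  exact h.comp measurable_swap

theorem map_kacRot_mul_eq_mconv {n : ℕ} (hn : 2 ≤ n) {Ω : Type*} [MeasurableSpace Ω]
    {P : Measure Ω} [IsProbabilityMeasure P] {ρ : Ω → Matrix (Fin n) (Fin n) ℝ}
    (hρ : Measurable ρ) {c : Ω → pairs n → ℝ} (hc : ∀ p, Measurable fun ω => c ω p) :
    (P.prod ((pairLaw n).prod uniformAngle)).map
      (fun z => kacRot z.2.1.1.1 z.2.1.1.2 (z.2.2 - c z.1 z.2.1) * ρ z.1) =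
        stepLaw n ∗ₘ P.map ρ := by
  have := isProbabilityMeasure_stepLaw hn
  have := isProbabilityMeasure_pairLaw hn
  have : IsProbabilityMeasure (P.map ρ) := Measure.isProbabilityMeasure_map hρ.aemeasurable
  have hc' : Measurable fun z : Ω × pairs n => c z.1 z.2 :=
    measurable_from_prod_countable_left hc
  have hm : Measurable fun z : Ω × (pairs n × ℝ) =>
      kacRot z.2.1.1.1 z.2.1.1.2 (z.2.2 - c z.1 z.2.1) * ρ z.1 :=
    ((measurable_kacRot_pairs n).comp ((measurable_fst.comp measurable_snd).prodMk
      ((measurable_snd.comp measurable_snd).sub (hc'.comp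
        (measurable_fst.prodMk (measurable_fst.comp measurable_snd)))))).mul
      (hρ.comp measurable_fst)
  refine Measure.ext_of_lintegral _ fun f hf => ?_
  rw [lintegral_map hf hm, Measure.lintegral_mconv hf, lintegral_prod]
  swap
  · exact (hf.comp hm).aemeasurable
  rw [lintegral_lintegral_swap (f := fun x y => f (x * y)) (hf.comp measurable_mul).aemeasurable,
    lintegral_map _ hρ]
  swap
  · exact Measurable.lintegral_prod_right' (f := fun z => f (z.2 * z.1))
      (hf.comp (measurable_snd.mul measurable_fst))
  refine lintegral_congr fun ω => ?_
  rw [lintegral_stepLaw (f := fun r => f (r * ρ ω)) (hf.comp (measurable_mul_const _)),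
    lintegral_prod]
  swap
  · exact (hf.comp (hm.comp measurable_prodMk_left)).aemeasurable
  refine lintegral_congr fun p => ?_
  exact lintegral_uniformAngle_sub (f := fun θ => f (kacRot p.1.1 p.1.2 θ * ρ ω))
    (fun θ => by simp only [kacRot_periodic θ]) (c ω p)

theorem lintegral_prod_pairLaw_uniformAngle {n : ℕ} (hn : 2 ≤ n) {Ω : Type*} [MeasurableSpace Ω]
    {P : Measure Ω} {F : pairs n → Ω → ℝ≥0∞} (hF : ∀ p, Measurable (F p)) :
    ∫⁻ z, F z.2.1 z.1 ∂(P.prod ((pairLaw n).prod uniformAngle)) =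
      ∫⁻ ω, (n.choose 2 : ℝ≥0∞)⁻¹ * ∑ p, F p ω ∂P := by
  have := isProbabilityMeasure_pairLaw hn
  have hF' : Measurable fun w : Ω × pairs n => F w.2 w.1 :=
    measurable_from_prod_countable_left hF
  have hm : Measurable fun z : Ω × (pairs n × ℝ) => F z.2.1 z.1 :=
    hF'.comp (measurable_fst.prodMk (measurable_fst.comp measurable_snd))
  rw [lintegral_prod _ hm.aemeasurable]
  refine lintegral_congr fun ω => ?_
  have hm' : Measurable fun z : pairs n × ℝ => F z.1 ω := hm.comp measurable_prodMk_left
  rw [lintegral_prod _ hm'.aemeasurable]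
  simp only [lintegral_const, measure_univ, mul_one, lintegral_pairLaw]

/-- A random family of differentiable paths in `SO(n)` with endpoints `ρ₀ g₀` and `ρ₁ g₁`, where
`ρ₀` and `ρ₁` are both distributed as the product of `t` steps of Kac's walk. -/
structure PathCoupling (n t : ℕ) (g₀ g₁ : Matrix (Fin n) (Fin n) ℝ) where
  /-- The underlying probability space. -/
  Ω : Type
  [measurableSpace : MeasurableSpace Ω]
  /-- The underlying probability measure. -/
  P : Measure Ω
  [isProbabilityMeasure : IsProbabilityMeasure P]
  /-- The random path. -/
  X : Ω → ℝ → Matrix (Fin n) (Fin n) ℝ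
  /-- The logarithmic derivative of the random path. -/
  A : Ω → ℝ → Matrix (Fin n) (Fin n) ℝ
  /-- The random displacement of the starting point. -/
  ρ₀ : Ω → Matrix (Fin n) (Fin n) ℝ
  /-- The random displacement of the final point. -/
  ρ₁ : Ω → Matrix (Fin n) (Fin n) ℝ
  measurable_A : Measurable (Function.uncurry A)
  continuous_A : ∀ ω, Continuous (A ω)
  skew : ∀ ω s, (A ω s)ᵀ = -A ω s
  mem_SO : ∀ ω s, X ω s ∈ SO n
  hasDeriv : ∀ ω s, HasMatrixDerivAt (X ω) (A ω s * X ω s) s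
  measurable_ρ₀ : Measurable ρ₀
  measurable_ρ₁ : Measurable ρ₁
  X_zero : ∀ ω, X ω 0 = ρ₀ ω * g₀
  X_one : ∀ ω, X ω 1 = ρ₁ ω * g₁
  map_ρ₀ : P.map ρ₀ = iterStepLaw n t
  map_ρ₁ : P.map ρ₁ = iterStepLaw n t

namespace PathCoupling

attribute [instance] PathCoupling.measurableSpace PathCoupling.isProbabilityMeasure

variable {n t : ℕ} {g₀ g₁ : Matrix (Fin n) (Fin n) ℝ}

/-- The energy of a random path. -/
def pathEnergy (c : PathCoupling n t g₀ g₁) (ω : c.Ω) : ℝ≥0∞ :=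
  ∫⁻ s in Set.Icc (0 : ℝ) 1, ENNReal.ofReal (hsq (c.A ω s))

/-- The mean energy of a random family of paths. -/
def meanEnergy (c : PathCoupling n t g₀ g₁) : ℝ≥0∞ := ∫⁻ ω, c.pathEnergy ω ∂c.P

theorem measurable_ofReal_hsq (c : PathCoupling n t g₀ g₁) :
    Measurable fun z : c.Ω × ℝ => ENNReal.ofReal (hsq (c.A z.1 z.2)) :=
  ENNReal.measurable_ofReal.comp (continuous_hsq.measurable.comp c.measurable_A)

theorem measurable_pathEnergy (c : PathCoupling n t g₀ g₁) : Measurable c.pathEnergy :=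
  c.measurable_ofReal_hsq.lintegral_prod_right'

/-- The accumulated angle used to synchronize the rotations of the plane `p` along the path. -/
def angle (c : PathCoupling n t g₀ g₁) (ω : c.Ω) (p : pairs n) (s : ℝ) : ℝ :=
  ∫ u in (0 : ℝ)..s, c.A ω u p.1.2 p.1.1

variable (c : PathCoupling n t g₀ g₁)

theorem continuous_A_apply (ω : c.Ω) (i j : Fin n) : Continuous fun s => c.A ω s i j :=
  (c.continuous_A ω).matrix_elem i j

theorem measurable_A_apply (i j : Fin n) : Measurable fun z : c.Ω × ℝ => c.A z.1 z.2 i j :=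
  (continuous_id.matrix_elem i j).measurable.comp c.measurable_A

theorem measurable_angle : Measurable fun z : (c.Ω × ℝ) × pairs n => c.angle z.1.1 z.2 z.1.2 :=
  measurable_from_prod_countable_left fun p => measurable_intervalIntegral_of_continuous
    (a := fun ω u => c.A ω u p.1.2 p.1.1) (c.measurable_A_apply _ _)
    (fun ω => c.continuous_A_apply ω _ _)

theorem measurable_angle_apply (p : pairs n) (s : ℝ) : Measurable fun ω => c.angle ω p s :=
  c.measurable_angle.comp ((measurable_id.prodMk measurable_const).prodMk measurable_const)

theorem hasDerivAt_angle (ω : c.Ω) (p : pairs n) (s : ℝ) :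
    HasDerivAt (c.angle ω p) (c.A ω s p.1.2 p.1.1) s :=
  ((c.continuous_A_apply ω p.1.2 p.1.1).integral_hasStrictDerivAt 0 s).hasDerivAt

/-- The rotation applied to the point at time `s` of the random path. -/
def rot (z : c.Ω × (pairs n × ℝ)) (s : ℝ) : Matrix (Fin n) (Fin n) ℝ :=
  kacRot z.2.1.1.1 z.2.1.1.2 (z.2.2 - c.angle z.1 z.2.1 s)

theorem rot_mem_SO (z : c.Ω × (pairs n × ℝ)) (s : ℝ) : c.rot z s ∈ SO n :=
  kacRot_mem_SO (ne_of_pairs _) _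

theorem measurable_rot : Measurable (Function.uncurry c.rot) := by
  have hz : Measurable fun w : (c.Ω × (pairs n × ℝ)) × ℝ => w.1.2.1 :=
    measurable_fst.comp (measurable_snd.comp measurable_fst)
  refine (measurable_kacRot_pairs n).comp (hz.prodMk (Measurable.sub
    (measurable_snd.comp (measurable_snd.comp measurable_fst)) (c.measurable_angle.comp
      (((measurable_fst.comp measurable_fst).prodMk measurable_snd).prodMk hz))))

theorem hasMatrixDerivAt_rot (z : c.Ω × (pairs n × ℝ)) (s : ℝ) :
    HasMatrixDerivAt (c.rot z) (-(c.A z.1 s z.2.1.1.2 z.2.1.1.1 •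
      kacGen z.2.1.1.1 z.2.1.1.2) * c.rot z s) s := by
  intro i j
  have h := (hasMatrixDerivAt_kacRot (ne_of_pairs z.2.1)
    (z.2.2 - c.angle z.1 z.2.1 s) i j).comp s
    ((c.hasDerivAt_angle z.1 z.2.1 s).const_sub z.2.2)
  refine h.congr_deriv ?_
  rw [Matrix.neg_mul, Matrix.smul_mul]
  simp only [rot, Matrix.neg_apply, Matrix.smul_apply, smul_eq_mul]
  ring

/-- The logarithmic derivative of the rotated random path. -/
def stepA (z : c.Ω × (pairs n × ℝ)) (s : ℝ) : Matrix (Fin n) (Fin n) ℝ :=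
  c.rot z s * (c.A z.1 s - c.A z.1 s z.2.1.1.2 z.2.1.1.1 • kacGen z.2.1.1.1 z.2.1.1.2) *
    (c.rot z s)ᵀ

theorem stepA_mul (z : c.Ω × (pairs n × ℝ)) (s : ℝ) (Y : Matrix (Fin n) (Fin n) ℝ) :
    c.stepA z s * (c.rot z s * Y) =
      -(c.A z.1 s z.2.1.1.2 z.2.1.1.1 • kacGen z.2.1.1.1 z.2.1.1.2) * c.rot z s * Y +
        c.rot z s * (c.A z.1 s * Y) := by
  have hcomm : kacGen z.2.1.1.1 z.2.1.1.2 * c.rot z s = c.rot z s * kacGen z.2.1.1.1 z.2.1.1.2 :=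
    kacGen_mul_kacRot (ne_of_pairs _) _
  rw [stepA, Matrix.mul_assoc, ← Matrix.mul_assoc _ᵀ, SO.transpose_mul_self (c.rot_mem_SO z s),
    Matrix.one_mul, Matrix.neg_mul, Matrix.smul_mul, hcomm]
  simp only [Matrix.mul_sub, Matrix.sub_mul, Matrix.neg_mul, Matrix.mul_smul, Matrix.smul_mul,
    Matrix.mul_assoc]
  abel

theorem hsq_stepA (z : c.Ω × (pairs n × ℝ)) (s : ℝ) :
    hsq (c.stepA z s) = hsq (c.A z.1 s) - 2 * c.A z.1 s z.2.1.1.2 z.2.1.1.1 ^ 2 := by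
  have h := c.rot_mem_SO z s
  rw [stepA, hsq_mul_right _ (by rw [transpose_transpose]; exact SO.transpose_mul_self h),
    hsq_mul_left _ (SO.transpose_mul_self h),
    hsq_sub_smul_kacGen (ne_of_pairs _) (c.skew _ _)]

theorem measurable_stepA : Measurable (Function.uncurry c.stepA) := by
  have hF : Measurable fun w : Matrix (Fin n) (Fin n) ℝ × pairs n =>
      w.1 - w.1 w.2.1.2 w.2.1.1 • kacGen w.2.1.1 w.2.1.2 :=
    measurable_from_prod_countable_left fun p => by
      have h : Continuous fun Z : Matrix (Fin n) (Fin n) ℝ =>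
          Z - Z p.1.2 p.1.1 • kacGen p.1.1 p.1.2 :=
        continuous_id.sub ((continuous_id.matrix_elem p.1.2 p.1.1).smul continuous_const)
      exact h.measurable
  have hA : Measurable fun w : (c.Ω × (pairs n × ℝ)) × ℝ => (c.A w.1.1 w.2, w.1.2.1) :=
    (c.measurable_A.comp ((measurable_fst.comp measurable_fst).prodMk measurable_snd)).prodMk
      (measurable_fst.comp (measurable_snd.comp measurable_fst))
  have hRT : Measurable fun w : (c.Ω × (pairs n × ℝ)) × ℝ => (c.rot w.1 w.2)ᵀ :=
    (continuous_id.matrix_transpose).measurable.comp c.measurable_rot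
  exact (c.measurable_rot.mul (hF.comp hA)).mul hRT

theorem map_rot_mul (hn : 2 ≤ n) {ρ : c.Ω → Matrix (Fin n) (Fin n) ℝ} (hρ : Measurable ρ)
    (s : ℝ) : (c.P.prod ((pairLaw n).prod uniformAngle)).map (fun z => c.rot z s * ρ z.1) =
      stepLaw n ∗ₘ c.P.map ρ :=
  map_kacRot_mul_eq_mconv hn hρ (c := fun ω p => c.angle ω p s)
    fun p => c.measurable_angle_apply p s

/-- One more step of Kac's walk, with rotation angles synchronized along the random path. -/
def step (hn : 2 ≤ n) : PathCoupling n (t + 1) g₀ g₁ :=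
  have := isProbabilityMeasure_pairLaw hn
  { Ω := c.Ω × (pairs n × ℝ)
    P := c.P.prod ((pairLaw n).prod uniformAngle)
    X := fun z s => c.rot z s * c.X z.1 s
    A := c.stepA
    ρ₀ := fun z => c.rot z 0 * c.ρ₀ z.1
    ρ₁ := fun z => c.rot z 1 * c.ρ₁ z.1
    measurable_A := c.measurable_stepA
    continuous_A := fun z => by
      have hR : Continuous (c.rot z) := continuous_of_hasMatrixDerivAt (c.hasMatrixDerivAt_rot z)
      exact (hR.matrix_mul ((c.continuous_A z.1).sub
        ((c.continuous_A_apply z.1 _ _).smul continuous_const))).matrix_mul hR.matrix_transpose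
    skew := fun z s => by
      simp only [stepA, transpose_mul, transpose_sub, transpose_smul, transpose_transpose,
        c.skew, kacGen_transpose, Matrix.mul_assoc, smul_neg, Matrix.mul_sub, Matrix.sub_mul,
        Matrix.neg_mul, Matrix.mul_neg]
      abel
    mem_SO := fun z s => SO.mul_mem (c.rot_mem_SO z s) (c.mem_SO z.1 s)
    hasDeriv := fun z s => ((c.hasMatrixDerivAt_rot z s).mul (c.hasDeriv z.1 s)).congr_deriv
      (c.stepA_mul z s _).symm
    measurable_ρ₀ := (c.measurable_rot.comp (measurable_id.prodMk measurable_const)).mul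
      (c.measurable_ρ₀.comp measurable_fst)
    measurable_ρ₁ := (c.measurable_rot.comp (measurable_id.prodMk measurable_const)).mul
      (c.measurable_ρ₁.comp measurable_fst)
    X_zero := fun z => by rw [c.X_zero, Matrix.mul_assoc]
    X_one := fun z => by rw [c.X_one, Matrix.mul_assoc]
    map_ρ₀ := by
      rw [iterStepLaw, ← c.map_ρ₀]
      exact c.map_rot_mul hn c.measurable_ρ₀ 0
    map_ρ₁ := by
      rw [iterStepLaw, ← c.map_ρ₁]
      exact c.map_rot_mul hn c.measurable_ρ₁ 1 }

theorem sum_ofReal_hsq_sub (hn : 2 ≤ n) {A : Matrix (Fin n) (Fin n) ℝ} (hA : Aᵀ = -A) :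
    (n.choose 2 : ℝ≥0∞)⁻¹ * ∑ p : pairs n, ENNReal.ofReal (hsq A - 2 * A p.1.2 p.1.1 ^ 2) =
      ENNReal.ofReal (1 - 1 / n.choose 2) * ENNReal.ofReal (hsq A) := by
  have hC : (0 : ℝ) < n.choose 2 := by exact_mod_cast Nat.choose_pos hn
  have hC1 : (1 : ℝ) ≤ n.choose 2 := by exact_mod_cast Nat.choose_pos hn
  have hpos (p : pairs n) : 0 ≤ hsq A - 2 * A p.1.2 p.1.1 ^ 2 := by
    rw [← hsq_sub_smul_kacGen (ne_of_pairs p) hA]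
    exact hsq_nonneg _
  rw [← ENNReal.ofReal_sum_of_nonneg (fun p _ => hpos p), Finset.sum_sub_distrib,
    Finset.sum_coe_sort (pairs n) (fun p => 2 * A p.2 p.1 ^ 2), sum_pairs_sq_eq_hsq hA,
    ← ENNReal.ofReal_natCast, ← ENNReal.ofReal_inv_of_pos hC,
    ← ENNReal.ofReal_mul (by positivity), ← ENNReal.ofReal_mul]
  · congr 1
    simp only [Finset.sum_const, Finset.card_univ, Fintype.card_coe, card_pairs, nsmul_eq_mul]
    field_simp
  · rw [sub_nonneg, div_le_one hC]
    exact hC1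

theorem meanEnergy_step (hn : 2 ≤ n) :
    (c.step hn).meanEnergy = ENNReal.ofReal (1 - 1 / n.choose 2) * c.meanEnergy := by
  have hcA (p : pairs n) : Measurable fun z : c.Ω × ℝ =>
      ENNReal.ofReal (hsq (c.A z.1 z.2) - 2 * c.A z.1 z.2 p.1.2 p.1.1 ^ 2) :=
    ENNReal.measurable_ofReal.comp ((continuous_hsq.measurable.comp c.measurable_A).sub
      (((c.measurable_A_apply _ _).pow_const 2).const_mul 2))
  have h : (c.step hn).meanEnergy = ∫⁻ z : c.Ω × (pairs n × ℝ),
      (∫⁻ s in Set.Icc (0 : ℝ) 1, ENNReal.ofReal (hsq (c.A z.1 s) -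
        2 * c.A z.1 s z.2.1.1.2 z.2.1.1.1 ^ 2)) ∂(c.P.prod ((pairLaw n).prod uniformAngle)) :=
    lintegral_congr fun z => lintegral_congr fun s =>
      congrArg ENNReal.ofReal (c.hsq_stepA z s)
  rw [h, lintegral_prod_pairLaw_uniformAngle hn (F := fun p ω => ∫⁻ s in Set.Icc (0 : ℝ) 1,
      ENNReal.ofReal (hsq (c.A ω s) - 2 * c.A ω s p.1.2 p.1.1 ^ 2))
      fun p => (hcA p).lintegral_prod_right', meanEnergy,
    ← lintegral_const_mul _ c.measurable_pathEnergy]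
  refine lintegral_congr fun ω => ?_
  have hω (p : pairs n) : Measurable fun s : ℝ =>
      ENNReal.ofReal (hsq (c.A ω s) - 2 * c.A ω s p.1.2 p.1.1 ^ 2) :=
    (ENNReal.continuous_ofReal.comp ((continuous_hsq.comp (c.continuous_A ω)).sub
      (continuous_const.mul ((c.continuous_A_apply ω _ _).pow 2)))).measurable
  have hω' : Measurable fun s : ℝ => ENNReal.ofReal (hsq (c.A ω s)) :=
    (ENNReal.continuous_ofReal.comp (continuous_hsq.comp (c.continuous_A ω))).measurable
  rw [← lintegral_finsetSum _ (fun p _ => hω p), pathEnergy, ← lintegral_const_mul _ hω',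
    ← lintegral_const_mul _ (Finset.measurable_sum _ fun p _ => hω p)]
  exact lintegral_congr fun s => sum_ofReal_hsq_sub hn (c.skew ω s)

end PathCoupling

theorem exists_pathCoupling {n : ℕ} (hn : 2 ≤ n) {γ A : ℝ → Matrix (Fin n) (Fin n) ℝ}
    (hA : Continuous A) (hskew : ∀ s, (A s)ᵀ = -A s) (hγ : ∀ s, γ s ∈ SO n)
    (hd : ∀ s, HasMatrixDerivAt γ (A s * γ s) s) (t : ℕ) :
    ∃ c : PathCoupling n t (γ 0) (γ 1), c.meanEnergy = ENNReal.ofReal (1 - 1 / n.choose 2) ^ t *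
      ∫⁻ s in Set.Icc (0 : ℝ) 1, ENNReal.ofReal (hsq (A s)) := by
  induction t with
  | zero =>
    let c : PathCoupling n 0 (γ 0) (γ 1) :=
      { Ω := Unit
        P := Measure.dirac ()
        X := fun _ => γ
        A := fun _ => A
        ρ₀ := fun _ => 1
        ρ₁ := fun _ => 1
        measurable_A := hA.measurable.comp measurable_snd
        continuous_A := fun _ => hA
        skew := fun _ => hskew
        mem_SO := fun _ => hγ
        hasDeriv := fun _ => hd
        measurable_ρ₀ := measurable_const
        measurable_ρ₁ := measurable_const
        X_zero := fun _ => (Matrix.one_mul _).symm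
        X_one := fun _ => (Matrix.one_mul _).symm
        map_ρ₀ := Measure.map_dirac' measurable_const _
        map_ρ₁ := Measure.map_dirac' measurable_const _ }
    refine ⟨c, ?_⟩
    simp [PathCoupling.meanEnergy, PathCoupling.pathEnergy, c]
  | succ t ih =>
    obtain ⟨c, hc⟩ := ih
    exact ⟨c.step hn, by rw [c.meanEnergy_step, hc, pow_succ', mul_assoc]⟩

theorem exists_fine_partition_SO (n : ℕ) {δ : ℝ} (hδ : 0 < δ) :
    ∃ (g : ℕ → Matrix (Fin n) (Fin n) ℝ) (B : ℕ → Set (Matrix (Fin n) (Fin n) ℝ)),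
      (∀ m, g m ∈ SO n) ∧ (∀ m, MeasurableSet (B m)) ∧ Pairwise (Function.onFun Disjoint B) ∧
      (⋃ m, B m) = SO n ∧ ∀ m, ∀ x ∈ B m, hsq (x - g m) ≤ δ := by
  have : Nonempty (SO n) := ⟨⟨1, SO.one_mem n⟩⟩
  let g : ℕ → SO n := TopologicalSpace.denseSeq (SO n)
  let U : ℕ → Set (Matrix (Fin n) (Fin n) ℝ) := fun m => SO n ∩ {x | hsq (x - (g m).1) < δ}
  have hU (m : ℕ) : MeasurableSet (U m) :=
    (SO.measurableSet n).inter
      (isOpen_lt (continuous_hsq.comp (continuous_sub_right _)) continuous_const).measurableSet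
  refine ⟨fun m => g m, disjointed U, fun m => (g m).2, fun m => MeasurableSet.disjointed hU m,
    disjoint_disjointed U, ?_, fun m x hx => (disjointed_subset U m hx).2.le⟩
  rw [iUnion_disjointed]
  refine Set.Subset.antisymm (Set.iUnion_subset fun m => Set.inter_subset_left) fun x hx => ?_
  have hopen : IsOpen {y : SO n | hsq (x - y.1) < δ} :=
    isOpen_lt (continuous_hsq.comp (continuous_const.sub continuous_subtype_val)) continuous_const
  obtain ⟨m, hm⟩ := (TopologicalSpace.denseRange_denseSeq (SO n)).exists_mem_open hopen
    ⟨⟨x, hx⟩, by simpa [hsq] using hδ⟩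
  exact Set.mem_iUnion.mpr ⟨m, hx, hm⟩

theorem PathCoupling.ρ₁_mem_SO {n t : ℕ} {g₀ g₁ : Matrix (Fin n) (Fin n) ℝ}
    (c : PathCoupling n t g₀ g₁) (hg : g₁ ∈ SO n) (ω : c.Ω) : c.ρ₁ ω ∈ SO n := by
  have h : c.ρ₁ ω = c.X ω 1 * g₁ᵀ := by
    rw [c.X_one, Matrix.mul_assoc, SO.mul_transpose_self hg, Matrix.mul_one]
  rw [h]
  exact SO.mul_mem (c.mem_SO ω 1) (SO.transpose_mem hg)

theorem PathCoupling.DSO_rpow_two_le {n t : ℕ} {g₁ g x : Matrix (Fin n) (Fin n) ℝ}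
    (c : PathCoupling n t 1 g₁) (hg₁ : g₁ ∈ SO n) (hg : g ∈ SO n) (hx : x ∈ SO n)
    {κ : ℝ} (hκ : 0 < κ) (ω : c.Ω) :
    DSO n (c.ρ₀ ω * x) (c.ρ₁ ω * g * x) ^ (2 : ℝ) ≤ ENNReal.ofReal (1 + κ) * c.pathEnergy ω +
      ENNReal.ofReal ((1 + 1 / κ) * (Real.pi ^ 2 / 4 * hsq (g - g₁))) := by
  obtain ⟨h, B, -, h0, h1, hSO, hd, -, hB⟩ :=
    exists_oneParameter (SO.mul_mem (SO.transpose_mem hg₁) hg)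
  have hXT (s : ℝ) : (c.X ω s)ᵀ * c.X ω s = 1 := SO.transpose_mul_self (c.mem_SO ω s)
  have hX : Continuous (c.X ω) := continuous_of_hasMatrixDerivAt (c.hasDeriv ω)
  have key := DSO_rpow_two_le_energy (Z := fun s => c.X ω s * (h s * x))
    (B := fun s => c.A ω s + c.X ω s * B * (c.X ω s)ᵀ)
    ((c.continuous_A ω).add ((hX.matrix_mul continuous_const).matrix_mul hX.matrix_transpose))
    (fun s => SO.mul_mem (c.mem_SO ω s) (SO.mul_mem (hSO s) hx)) (fun s => by
      refine ((c.hasDeriv ω s).mul ((hd s).mul_const x)).congr_deriv ?_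
      rw [Matrix.add_mul, Matrix.mul_assoc (c.A ω s), Matrix.mul_assoc _ (c.X ω s)ᵀ,
        ← Matrix.mul_assoc (c.X ω s)ᵀ, hXT, Matrix.one_mul, Matrix.mul_assoc (c.X ω s),
        Matrix.mul_assoc B])
  have hZ0 : c.X ω 0 * (h 0 * x) = c.ρ₀ ω * x := by
    rw [c.X_zero, h0, Matrix.mul_one, Matrix.one_mul]
  have hZ1 : c.X ω 1 * (h 1 * x) = c.ρ₁ ω * g * x := by
    rw [c.X_one, h1, ← Matrix.mul_assoc, Matrix.mul_assoc (c.ρ₁ ω), ← Matrix.mul_assoc g₁,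
      SO.mul_transpose_self hg₁, Matrix.one_mul]
  simp only [hZ0, hZ1] at key
  have hsub : hsq (g₁ᵀ * g - 1) = hsq (g - g₁) := by
    rw [← hsq_mul_left (g₁ᵀ * g - 1) (SO.transpose_mul_self hg₁), Matrix.mul_sub,
      ← Matrix.mul_assoc, SO.mul_transpose_self hg₁, Matrix.one_mul, Matrix.mul_one]
  rw [hsub] at hB
  have hmeas : Measurable fun s : ℝ => ENNReal.ofReal (hsq (c.A ω s)) :=
    (ENNReal.continuous_ofReal.comp (continuous_hsq.comp (c.continuous_A ω))).measurable
  refine key.trans ?_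
  rw [PathCoupling.pathEnergy, ← lintegral_const_mul _ hmeas]
  calc _ ≤ ∫⁻ s in Set.Icc (0 : ℝ) 1, (ENNReal.ofReal (1 + κ) * ENNReal.ofReal (hsq (c.A ω s)) +
        ENNReal.ofReal ((1 + 1 / κ) * (Real.pi ^ 2 / 4 * hsq (g - g₁)))) := by
        refine lintegral_mono fun s => ?_
        rw [← ENNReal.ofReal_mul (by positivity), ← ENNReal.ofReal_add
          (mul_nonneg (by positivity) (hsq_nonneg _))
          (mul_nonneg (by positivity) (mul_nonneg (by positivity) (hsq_nonneg _)))]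
        refine ENNReal.ofReal_le_ofReal ((hsq_add_le _ _ hκ).trans ?_)
        rw [hsq_mul_right _ (by rw [transpose_transpose, hXT]), hsq_mul_left _ (hXT s)]
        gcongr
    _ = _ := by
        rw [lintegral_add_left (hmeas.const_mul _)]
        simp

theorem one_sub_inv_choose_pow_mul_le {n : ℕ} (hn : 2 ≤ n) {ε : ℝ} (hε : 0 < ε) {t : ℕ}
    (ht : (n : ℝ) ^ 2 * Real.log (Real.pi * Real.sqrt n / ε) ≤ (t : ℝ)) :
    (1 - 1 / (n.choose 2 : ℝ)) ^ t * (Real.pi ^ 2 * n) ≤ ε ^ 2 := by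
  have hn' : (2 : ℝ) ≤ n := by exact_mod_cast hn
  have hC1 : (1 : ℝ) ≤ n.choose 2 := by exact_mod_cast Nat.choose_pos hn
  have hCn : (n.choose 2 : ℝ) ≤ n ^ 2 / 2 := by
    rw [Nat.cast_choose_two]
    nlinarith
  have hbase : (2 : ℝ) / n ^ 2 ≤ 1 / n.choose 2 := by
    rw [div_le_div_iff₀ (by positivity) (by positivity)]
    linarith
  have hq : Real.pi * Real.sqrt n / ε > 0 := by positivity
  have h1 : (1 - 1 / (n.choose 2 : ℝ)) ^ t ≤ Real.exp (-(2 / n ^ 2)) ^ t := by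
    refine pow_le_pow_left₀ ?_ ?_ t
    · rw [sub_nonneg, div_le_one (by positivity)]
      exact hC1
    · have := Real.one_sub_le_exp_neg (2 / (n : ℝ) ^ 2)
      linarith
  have h2 : Real.exp (-(2 / n ^ 2)) ^ t ≤ ((Real.pi * Real.sqrt n / ε) ^ 2)⁻¹ := by
    rw [← Real.exp_nat_mul, ← Real.exp_log (inv_pos.mpr (pow_pos hq 2)), Real.exp_le_exp,
      Real.log_inv, Real.log_pow]
    have : Real.log (Real.pi * Real.sqrt n / ε) ≤ t / n ^ 2 := by
      rw [le_div_iff₀ (by positivity)]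
      linarith
    have h3 : (t : ℝ) * -(2 / n ^ 2) = -(2 * (t / n ^ 2)) := by ring
    rw [h3]
    push_cast
    linarith
  calc _ ≤ ((Real.pi * Real.sqrt n / ε) ^ 2)⁻¹ * (Real.pi ^ 2 * n) := by
        gcongr
        exact h1.trans h2
    _ = ε ^ 2 := by
        rw [div_pow, mul_pow, Real.sq_sqrt (by positivity)]
        field_simp

theorem tsum_lintegral_restrict_prod {α β : Type*} [MeasurableSpace α] [MeasurableSpace β]
    {H : Measure α} [SFinite H] {Q : Measure β} [SFinite Q] {S : Set α} {B : ℕ → Set α}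
    (hB : ∀ m, MeasurableSet (B m)) (hdisj : Pairwise (Function.onFun Disjoint B))
    (hS : (⋃ m, B m) = S) (hH : H Sᶜ = 0) {Φ : α × β → ℝ≥0∞} (hΦ : Measurable Φ) :
    ∑' m, ∫⁻ z, Φ z ∂((H.restrict (B m)).prod Q) = ∫⁻ z, Φ z ∂(H.prod Q) := by
  have hres : H.restrict S = H := Measure.restrict_eq_self_of_ae_mem (mem_ae_iff.mpr hH)
  simp only [lintegral_prod Φ hΦ.aemeasurable]
  rw [← lintegral_iUnion hB hdisj, hS, hres]

theorem lintegral_prod_map_left {α β γ Ω : Type*} [MeasurableSpace α] [MeasurableSpace β]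
    [MeasurableSpace γ] [MeasurableSpace Ω] {G : Measure α} [SFinite G] {P : Measure Ω}
    [IsProbabilityMeasure P] {μ : Measure γ} [SFinite μ] {ρ : Ω → β} (hρ : Measurable ρ)
    {Φ : α × β × γ → ℝ≥0∞} (hΦ : Measurable Φ) :
    ∫⁻ z, Φ (z.1, ρ z.2.1, z.2.2) ∂(G.prod (P.prod μ)) =
      ∫⁻ z, Φ z ∂(G.prod ((P.map ρ).prod μ)) := by
  have h1 : (P.map ρ).prod μ = (P.prod μ).map (Prod.map ρ id) := by
    conv_lhs => rw [← Measure.map_id (μ := μ)]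
    exact Measure.map_prod_map P μ hρ measurable_id
  have h2 : G.prod ((P.map ρ).prod μ) = (G.prod (P.prod μ)).map (Prod.map id (Prod.map ρ id)) := by
    rw [h1]
    conv_lhs => rw [← Measure.map_id (μ := G)]
    exact Measure.map_prod_map G (P.prod μ) measurable_id (hρ.prodMap measurable_id)
  rw [h2, lintegral_map hΦ (measurable_id.prodMap (hρ.prodMap measurable_id))]
  rfl

theorem lintegral_mul_mul_haarLike {n : ℕ} {H L μ : Measure (Matrix (Fin n) (Fin n) ℝ)}
    (hH : IsHaarLike (SO n) H) [IsProbabilityMeasure H] [IsProbabilityMeasure L]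
    [IsProbabilityMeasure μ] (hL : ∀ᵐ r ∂L, r ∈ SO n) (hμ : ∀ᵐ x ∂μ, x ∈ SO n)
    {f : Matrix (Fin n) (Fin n) ℝ → ℝ≥0∞} (hf : Measurable f) :
    ∫⁻ z, f (z.2.1 * z.1 * z.2.2) ∂(H.prod (L.prod μ)) = ∫⁻ g, f g ∂H := by
  have hΦ : Measurable fun z : Matrix (Fin n) (Fin n) ℝ × Matrix (Fin n) (Fin n) ℝ ×
      Matrix (Fin n) (Fin n) ℝ => f (z.2.1 * z.1 * z.2.2) :=
    hf.comp ((measurable_snd.fst.mul measurable_fst).mul measurable_snd.snd)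
  rw [lintegral_prod_symm _ hΦ.aemeasurable]
  have hinv : ∀ᵐ q ∂(L.prod μ), ∫⁻ g, f (q.1 * g * q.2) ∂H = ∫⁻ g, f g ∂H := by
    filter_upwards [Measure.quasiMeasurePreserving_fst.ae hL,
      Measure.quasiMeasurePreserving_snd.ae hμ] with q h1 h2
    conv_rhs => rw [← (hH.2.2 q.2 h2).2, lintegral_map hf (measurable_mul_const _),
      ← (hH.2.2 q.1 h1).1, lintegral_map (f := fun g => f (g * q.2))
        (hf.comp (measurable_mul_const _)) (measurable_const_mul _)]
  rw [lintegral_congr_ae hinv]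
  simp

theorem exists_pathCoupling_one {n : ℕ} (hn : 2 ≤ n) (t : ℕ) {g : Matrix (Fin n) (Fin n) ℝ}
    (hg : g ∈ SO n) : ∃ c : PathCoupling n t 1 g,
      c.meanEnergy ≤ ENNReal.ofReal ((1 - 1 / n.choose 2) ^ t * (Real.pi ^ 2 * n)) := by
  obtain ⟨γ, A, hskew, h0, rfl, hγ, hd, hA, -⟩ := exists_oneParameter hg
  rw [← h0]
  obtain ⟨c, hc⟩ := exists_pathCoupling hn (A := fun _ => A) continuous_const (fun _ => hskew)
    hγ hd t
  refine ⟨c, hc.le.trans ?_⟩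
  have hC1 : (1 : ℝ) ≤ n.choose 2 := by exact_mod_cast Nat.choose_pos hn
  have hC : (0 : ℝ) ≤ 1 - 1 / n.choose 2 := by
    rw [sub_nonneg, div_le_one (by positivity)]
    exact hC1
  rw [ENNReal.ofReal_mul (pow_nonneg hC t), ENNReal.ofReal_pow hC]
  gcongr
  simpa using ENNReal.ofReal_le_ofReal hA

theorem PathCoupling.lintegral_DSO_le {n t : ℕ} {g₁ : Matrix (Fin n) (Fin n) ℝ}
    (c : PathCoupling n t 1 g₁) (hg₁ : g₁ ∈ SO n) {H μ : Measure (Matrix (Fin n) (Fin n) ℝ)}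
    [IsProbabilityMeasure H] [IsProbabilityMeasure μ] (hμ : ∀ᵐ x ∂μ, x ∈ SO n)
    {B : Set (Matrix (Fin n) (Fin n) ℝ)} (hB : MeasurableSet B) (hBS : B ⊆ SO n) {κ δ : ℝ}
    (hκ : 0 < κ) (hδ : ∀ g ∈ B, hsq (g - g₁) ≤ δ) :
    ∫⁻ z, DSO n (c.ρ₀ z.2.1 * z.2.2) (c.ρ₁ z.2.1 * z.1 * z.2.2) ^ (2 : ℝ)
        ∂((H.restrict B).prod (c.P.prod μ)) ≤
      H B * (ENNReal.ofReal (1 + κ) * c.meanEnergy +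
        ENNReal.ofReal ((1 + 1 / κ) * (Real.pi ^ 2 / 4 * δ))) := by
  calc _ ≤ ∫⁻ z, (ENNReal.ofReal (1 + κ) * c.pathEnergy z.2.1 +
        ENNReal.ofReal ((1 + 1 / κ) * (Real.pi ^ 2 / 4 * δ)))
          ∂((H.restrict B).prod (c.P.prod μ)) := by
        refine lintegral_mono_ae ?_
        filter_upwards [Measure.quasiMeasurePreserving_fst.ae (ae_restrict_mem hB),
          Measure.quasiMeasurePreserving_snd.ae (Measure.quasiMeasurePreserving_snd.ae hμ)]
          with z h1 h2
        refine (c.DSO_rpow_two_le hg₁ (hBS h1) h2 hκ z.2.1).trans ?_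
        gcongr
        exact hδ _ h1
    _ = _ := by
        have hE : Measurable fun ω => ENNReal.ofReal (1 + κ) * c.pathEnergy ω :=
          c.measurable_pathEnergy.const_mul _
        have hE' : Measurable fun z : Matrix (Fin n) (Fin n) ℝ × c.Ω × Matrix (Fin n) (Fin n) ℝ =>
            ENNReal.ofReal (1 + κ) * c.pathEnergy z.2.1 := hE.comp measurable_snd.fst
        have hE'' : Measurable fun z : c.Ω × Matrix (Fin n) (Fin n) ℝ =>
            ENNReal.ofReal (1 + κ) * c.pathEnergy z.1 := hE.comp measurable_fst
        rw [lintegral_add_left hE', lintegral_prod _ hE'.aemeasurable]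
        simp only [lintegral_prod _ hE''.aemeasurable, lintegral_const, measure_univ, mul_one,
          lintegral_const_mul _ c.measurable_pathEnergy, PathCoupling.meanEnergy,
          ← Set.univ_prod_univ, Measure.prod_prod, Measure.restrict_apply_univ]
        ring

theorem wassersteinE_kacKernel_le {n : ℕ} (hn : 2 ≤ n) (t : ℕ)
    {μ : Measure (Matrix (Fin n) (Fin n) ℝ)} [IsProbabilityMeasure μ] (hμ : μ (SO n)ᶜ = 0)
    {κ : ℝ} (hκ : 0 < κ) :
    wassersteinE (DSO n) 2 (kernelIterate (kacKernel n) t μ) (haarLike (SO n)) ≤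
      (ENNReal.ofReal (1 + κ) * ENNReal.ofReal ((1 - 1 / n.choose 2) ^ t * (Real.pi ^ 2 * n)) +
        ENNReal.ofReal κ) ^ (1 / 2 : ℝ) := by
  have hH := isHaarLike_haarLike_SO n
  set H := haarLike (SO n)
  have := hH.1
  have := isProbabilityMeasure_iterStepLaw hn t
  have hμ' : ∀ᵐ x ∂μ, x ∈ SO n := mem_ae_iff.mpr hμ
  have hδ : 0 < κ / ((1 + 1 / κ) * (Real.pi ^ 2 / 4)) := by positivity
  obtain ⟨g, B, hg, hB, hdisj, hSO, hgB⟩ := exists_fine_partition_SO n hδ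
  have hBS (m : ℕ) : B m ⊆ SO n := hSO ▸ Set.subset_iUnion B m
  choose c hc using fun m => exists_pathCoupling_one hn t (hg m)
  let F (m : ℕ) (z : Matrix (Fin n) (Fin n) ℝ × (c m).Ω × Matrix (Fin n) (Fin n) ℝ) :
      Matrix (Fin n) (Fin n) ℝ × Matrix (Fin n) (Fin n) ℝ :=
    ((c m).ρ₀ z.2.1 * z.2.2, (c m).ρ₁ z.2.1 * z.1 * z.2.2)
  have hF (m : ℕ) : Measurable (F m) :=
    (((c m).measurable_ρ₀.comp measurable_snd.fst).mul measurable_snd.snd).prodMk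
      ((((c m).measurable_ρ₁.comp measurable_snd.fst).mul measurable_fst).mul measurable_snd.snd)
  let η : Measure (Matrix (Fin n) (Fin n) ℝ × Matrix (Fin n) (Fin n) ℝ) :=
    Measure.sum fun m => ((H.restrict (B m)).prod ((c m).P.prod μ)).map (F m)
  have hfst : η.map Prod.fst = kernelIterate (kacKernel n) t μ := by
    rw [kernelIterate_kacKernel hn]
    refine Measure.ext_of_lintegral _ fun f hf => ?_
    have hΦ : Measurable fun z : Matrix (Fin n) (Fin n) ℝ × Matrix (Fin n) (Fin n) ℝ ×
        Matrix (Fin n) (Fin n) ℝ => f (z.2.1 * z.2.2) :=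
      hf.comp (measurable_snd.fst.mul measurable_snd.snd)
    have hf' : Measurable fun a : Matrix (Fin n) (Fin n) ℝ × Matrix (Fin n) (Fin n) ℝ => f a.1 :=
      hf.comp measurable_fst
    rw [lintegral_map hf measurable_fst, lintegral_sum_measure]
    calc _ = ∑' m, ∫⁻ z, f (z.2.1 * z.2.2) ∂((H.restrict (B m)).prod ((iterStepLaw n t).prod μ)) :=
          tsum_congr fun m => by
            rw [lintegral_map hf' (hF m), ← (c m).map_ρ₀,
              ← lintegral_prod_map_left (c m).measurable_ρ₀ hΦ]
      _ = _ := by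
          rw [tsum_lintegral_restrict_prod hB hdisj hSO hH.2.1 hΦ, Measure.lintegral_mconv hf,
            lintegral_prod _ hΦ.aemeasurable]
          simp only [lintegral_const, measure_univ, mul_one]
          exact lintegral_prod _ (hf.comp measurable_mul).aemeasurable
  have hsnd : η.map Prod.snd = H := by
    refine Measure.ext_of_lintegral _ fun f hf => ?_
    have hΦ : Measurable fun z : Matrix (Fin n) (Fin n) ℝ × Matrix (Fin n) (Fin n) ℝ ×
        Matrix (Fin n) (Fin n) ℝ => f (z.2.1 * z.1 * z.2.2) :=
      hf.comp ((measurable_snd.fst.mul measurable_fst).mul measurable_snd.snd)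
    have hL : ∀ᵐ r ∂(iterStepLaw n t), r ∈ SO n := by
      rw [← (c 0).map_ρ₁]
      exact (ae_map_iff (c 0).measurable_ρ₁.aemeasurable (SO.measurableSet n)).mpr
        (ae_of_all _ ((c 0).ρ₁_mem_SO (hg 0)))
    have hf' : Measurable fun a : Matrix (Fin n) (Fin n) ℝ × Matrix (Fin n) (Fin n) ℝ => f a.2 :=
      hf.comp measurable_snd
    rw [lintegral_map hf measurable_snd, lintegral_sum_measure]
    calc _ = ∑' m, ∫⁻ z, f (z.2.1 * z.1 * z.2.2)
            ∂((H.restrict (B m)).prod ((iterStepLaw n t).prod μ)) :=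
          tsum_congr fun m => by
            rw [lintegral_map hf' (hF m), ← (c m).map_ρ₁,
              ← lintegral_prod_map_left (c m).measurable_ρ₁ hΦ]
      _ = _ := by
          rw [tsum_lintegral_restrict_prod hB hdisj hSO hH.2.1 hΦ,
            lintegral_mul_mul_haarLike hH hL hμ' hf]
  refine (iInf₂_le η ⟨hfst, hsnd⟩).trans (ENNReal.rpow_le_rpow ?_ (by norm_num))
  rw [lintegral_sum_measure]
  calc _ ≤ ∑' m, H (B m) * (ENNReal.ofReal (1 + κ) *
          ENNReal.ofReal ((1 - 1 / n.choose 2) ^ t * (Real.pi ^ 2 * n)) + ENNReal.ofReal κ) := by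
        refine ENNReal.tsum_le_tsum fun m => (lintegral_map_le _ _).trans
          (((c m).lintegral_DSO_le (hg m) hμ' (hB m) (hBS m) hκ (hgB m)).trans ?_)
        gcongr
        · exact hc m
        · exact le_of_eq (by field_simp)
    _ = _ := by
        rw [ENNReal.tsum_mul_right, ← measure_iUnion hdisj hB, hSO,
          (prob_compl_eq_zero_iff (SO.measurableSet n)).mp hH.2.1, one_mul]

/-- **Theorem 1 (Main result).** For every `n ≥ 2` and `ε > 0`, Kac's random walk on
`SO(n)` satisfies `τ_{D,2}(ε) ≤ ⌈n² ln(π√n/ε)⌉`: for every probability measure `μ`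
on `SO(n)` and every integer `t ≥ n² ln(π√n/ε)`, the time-`t` distribution `μK^t` is
within `ε` of the Haar measure in `L²` transportation cost for the intrinsic metric `D`. -/
theorem kac_walk_mixing_time (n : ℕ) (hn : 2 ≤ n) (ε : ℝ) (hε : 0 < ε)
    (μ : Measure (Matrix (Fin n) (Fin n) ℝ)) (hμprob : IsProbabilityMeasure μ)
    (hμSO : μ (SO n)ᶜ = 0) (t : ℕ)
    (ht : (n : ℝ) ^ 2 * Real.log (Real.pi * Real.sqrt n / ε) ≤ (t : ℝ)) :
    wassersteinE (DSO n) 2 (kernelIterate (kacKernel n) t μ) (haarLike (SO n)) ≤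
      ENNReal.ofReal ε := by
  have hle (κ : ℝ) (hκ : 0 < κ) :
      wassersteinE (DSO n) 2 (kernelIterate (kacKernel n) t μ) (haarLike (SO n)) ≤
        ENNReal.ofReal (((1 + κ) * ε ^ 2 + κ) ^ (1 / 2 : ℝ)) := by
    refine (wassersteinE_kacKernel_le hn t hμSO hκ).trans ?_
    rw [← ENNReal.ofReal_rpow_of_nonneg (by positivity) (by norm_num),
      ENNReal.ofReal_add (p := (1 + κ) * ε ^ 2) (by positivity) hκ.le,
      ENNReal.ofReal_mul (p := 1 + κ) (by positivity)]
    gcongr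
    exact one_sub_inv_choose_pow_mul_le hn hε ht
  have hlim : Tendsto (fun κ : ℝ => ENNReal.ofReal (((1 + κ) * ε ^ 2 + κ) ^ (1 / 2 : ℝ)))
      (𝓝[>] 0) (𝓝 (ENNReal.ofReal ε)) := by
    have h : ContinuousAt
        (fun κ : ℝ => ENNReal.ofReal (((1 + κ) * ε ^ 2 + κ) ^ (1 / 2 : ℝ))) 0 := by
      refine ENNReal.continuous_ofReal.continuousAt.comp (ContinuousAt.rpow_const ?_ ?_)
      · fun_prop
      · right; norm_num
    have h' := h.tendsto.mono_left (nhdsWithin_le_nhds (s := Set.Ioi 0))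
    rwa [add_zero, add_zero, one_mul, ← Real.sqrt_eq_rpow, Real.sqrt_sq hε.le] at h'
  exact ge_of_tendsto hlim (eventually_mem_nhdsWithin.mono hle)

end
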